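/- For every integer n of the form n = 5·2^{k+1} − 8 with k ≥ 1, there exists a 6-connected maximal 1-plane graph G on n vertices whose underlying graph has crossing number cr(G) = (3/5)(n−2). (Consequently, the lower bound cr(G) ≥ (3n−6)/5 for 6-connected maximal 1-plane graphs is tight for infinitely many n.) -/

import Mathlib

open Set

/-- A drawing of a simple graph in the plane: each vertex is assigned a distinct point,
and each edge a continuous arc (an injective continuous curve) joining its endpoints. -/
structure Drawing {V : Type} (G : SimpleGraph V) where
  pos : V → ℝ × ℝ
  pos_inj : Function.Injective pos
  arc : ∀ ⦃u v : V⦄, G.Adj u v → Set (ℝ × ℝ)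
  arc_symm : ∀ ⦃u v : V⦄ (h : G.Adj u v), arc h.symm = arc h
  arc_isArc : ∀ ⦃u v : V⦄ (h : G.Adj u v), ∃ γ : ℝ → ℝ × ℝ,
    ContinuousOn γ (Set.Icc 0 1) ∧ Set.InjOn γ (Set.Icc 0 1) ∧
    γ 0 = pos u ∧ γ 1 = pos v ∧ arc h = γ '' Set.Icc (0 : ℝ) 1

namespace Drawing

variable {V : Type} {G : SimpleGraph V} (D : Drawing G)

/-- The interior of the arc of an edge (the arc minus its endpoints). -/
def arcInt ⦃u v : V⦄ (h : G.Adj u v) : Set (ℝ × ℝ) :=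
  D.arc h \ {D.pos u, D.pos v}

/-- The interior of the drawing of an abstract edge `e : Sym2 V`. -/
def edgeInt (e : Sym2 V) : Set (ℝ × ℝ) :=
  {p | ∃ (u v : V) (h : G.Adj u v), e = s(u, v) ∧ p ∈ D.arcInt h}

/-- Two edges cross if they are distinct and their interiors meet. -/
def Cross (e f : Sym2 V) : Prop :=
  e ≠ f ∧ (D.edgeInt e ∩ D.edgeInt f).Nonempty

/-- The set of crossing points of the drawing. -/
def crossingSet : Set (ℝ × ℝ) :=
  {p | ∃ e f : Sym2 V, e ≠ f ∧ p ∈ D.edgeInt e ∧ p ∈ D.edgeInt f}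

/-- A good drawing: no vertex lies on the arc of a non-incident edge, any two distinct
edges meet in at most one interior point, and edges sharing an endpoint do not cross. -/
def IsGood : Prop :=
  (∀ (w : V) ⦃u v : V⦄ (h : G.Adj u v), D.pos w ∈ D.arc h → w = u ∨ w = v) ∧
  (∀ e f : Sym2 V, e ≠ f → (D.edgeInt e ∩ D.edgeInt f).Subsingleton) ∧
  (∀ ⦃u v w : V⦄ (h₁ : G.Adj u v) (h₂ : G.Adj u w), v ≠ w →
    D.arcInt h₁ ∩ D.arcInt h₂ = ∅)

/-- A drawing is 1-planar if every edge is crossed at most once. -/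
def IsOnePlanar : Prop :=
  ∀ e : Sym2 V, {f : Sym2 V | D.Cross e f}.Subsingleton

/-- The number of crossings of the drawing (each unordered pair of crossing edges
contributes one crossing). -/
noncomputable def crNum : ℕ :=
  Set.ncard {p : Sym2 V × Sym2 V | D.Cross p.1 p.2} / 2

/-- The subset of the plane covered by the drawing. -/
def drawingSet : Set (ℝ × ℝ) :=
  Set.range D.pos ∪ ⋃ (u : V) (v : V) (h : G.Adj u v), D.arc h

/-- A face of the drawing: a connected component of the complement of the drawing. -/
def IsFace (F : Set (ℝ × ℝ)) : Prop :=
  ∃ p ∉ D.drawingSet, F = connectedComponentIn D.drawingSetᶜ p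

/-- The set `∂(F)` of vertices on the boundary of a face `F`. -/
def faceVerts (F : Set (ℝ × ℝ)) : Set V :=
  {v | D.pos v ∈ frontier F}

/-- A true face of the planarization `G^×`: a face of the drawing whose boundary
contains no crossing point (i.e. it is incident with no fake vertex). -/
def IsTrueFace (F : Set (ℝ × ℝ)) : Prop :=
  D.IsFace F ∧ ∀ p ∈ D.crossingSet, p ∉ frontier F

/-- Two faces are adjacent if their boundaries share a common edge of the planarization,
i.e. they share a boundary point that is neither a vertex nor a crossing point. -/
def FaceAdj (F₁ F₂ : Set (ℝ × ℝ)) : Prop :=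
  F₁ ≠ F₂ ∧ ∃ p, p ∈ frontier F₁ ∧ p ∈ frontier F₂ ∧
    p ∉ Set.range D.pos ∧ p ∉ D.crossingSet

/-- The planarization `G^×` (crossings made into vertices of degree `4`) is a
triangulation: every face of the drawing has exactly three vertices of `G^×`
(true vertices or crossing points) on its boundary. -/
def PlanarizationIsTriangulation : Prop :=
  ∀ F : Set (ℝ × ℝ), D.IsFace F →
    ((Set.range D.pos ∪ D.crossingSet) ∩ frontier F).ncard = 3

/-- A maximal 1-plane graph: the drawing is good and 1-planar, and no edge between two
distinct non-adjacent vertices can be added to the drawing so that the result is still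
a good 1-planar drawing. -/
def IsMaximalOnePlane : Prop :=
  D.IsGood ∧ D.IsOnePlanar ∧
  ∀ u v : V, u ≠ v → ¬G.Adj u v →
    ∀ D' : Drawing (G ⊔ SimpleGraph.fromEdgeSet {s(u, v)}),
      D'.pos = D.pos →
      (∀ ⦃x y : V⦄ (h : G.Adj x y),
        D'.arc ((SimpleGraph.sup_adj _ _ _ _).mpr (Or.inl h)) = D.arc h) →
      ¬(D'.IsGood ∧ D'.IsOnePlanar)

/-- A maximal 1-plane graph is immovable if its number of crossings does not exceed that
of any good 1-planar drawing obtained from it by redrawing exactly one edge. -/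
def Immovable : Prop :=
  ∀ D' : Drawing G, D'.IsGood → D'.IsOnePlanar → D'.pos = D.pos →
    (∃ (u v : V) (_ : G.Adj u v), ∀ ⦃x y : V⦄ (h' : G.Adj x y),
      s(x, y) ≠ s(u, v) → D'.arc h' = D.arc h') →
    D.crNum ≤ D'.crNum

/-- The drawing induced on a subgraph. -/
def restrict {H : SimpleGraph V} (hle : H ≤ G) : Drawing H where
  pos := D.pos
  pos_inj := D.pos_inj
  arc := fun _ _ h => D.arc (hle h)
  arc_symm := fun _ _ h => D.arc_symm (hle h)
  arc_isArc := fun _ _ h => D.arc_isArc (hle h)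

/-- `H` is a planar skeleton `G_P` of the 1-plane graph `(G, D)`: it is obtained from `G`
by removing exactly one edge from each pair of crossing edges. -/
def IsPlanarSkeleton {H : SimpleGraph V} (_ : H ≤ G) : Prop :=
  (∀ e f : Sym2 V, D.Cross e f → (e ∈ H.edgeSet ↔ f ∉ H.edgeSet)) ∧
  ∀ e ∈ G.edgeSet, (¬∃ f, D.Cross e f) → e ∈ H.edgeSet

/-- `c_G(v)`: the number of crossing edges of the drawing incident with `v`. -/
noncomputable def cDeg (v : V) : ℕ :=
  Set.ncard {w : V | G.Adj v w ∧ ∃ f, D.Cross s(v, w) f}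

end Drawing

/-- The crossing number of a graph: the least number of crossings in a good drawing. -/
noncomputable def crossingNumber {V : Type} (G : SimpleGraph V) : ℕ :=
  sInf {n | ∃ D : Drawing G, D.IsGood ∧ D.crNum = n}

/-- A graph is `k`-connected if it stays connected after deleting any set of fewer than
`k` vertices. -/
def KConnected {V : Type} (G : SimpleGraph V) (k : ℕ) : Prop :=
  ∀ S : Set V, S.ncard < k → (G.induce Sᶜ).Connected

/-- A graph is 1-planar if it admits a good 1-planar drawing. -/
def Is1Planar {V : Type} (G : SimpleGraph V) : Prop :=
  ∃ D : Drawing G, D.IsGood ∧ D.IsOnePlanar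

/-- A maximal 1-planar graph: 1-planar, and adding any edge between distinct
non-adjacent vertices destroys 1-planarity. -/
def IsMaximal1Planar {V : Type} (G : SimpleGraph V) : Prop :=
  Is1Planar G ∧ ∀ u v : V, u ≠ v → ¬G.Adj u v →
    ¬Is1Planar (G ⊔ SimpleGraph.fromEdgeSet {s(u, v)})

/-!
A simple graph drawn without crossings has at most `3n - 6` edges, so deleting one edge of each
crossing pair of a good drawing gives `|E| + 6 ≤ 3n + cr`. Suppose that a 1-plane drawing has
`3n - 6` mutually non-crossing edges, that every other edge is crossed, and that each of these
`3n - 6` edges is crossed or joins ends of two crossing edges. Then the drawing attains the bound.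
It is also maximal: if a new edge crosses one of the `3n - 6`, the latter joins ends of a crossing
pair and can be rerouted along it, which would give `3n - 5` edges without crossings.

The kite ring has two poles and `r ≥ 2` sectors of 5 vertices, 18 edges and 3 crossings each, hence
`n = 5r + 2`, `|E| = 18r` and `cr = 3r`. It is drawn with straight segments on sectors that shrink
by the factor 2. Each position is linear in the scales `s` and `t` of the sectors involved, so the
required incidences reduce to finitely many sign checks of linear forms on cones of points
`(1, s, t)`.

The bound `3n - 6` is derived without Euler's formula. Call a graph weakly planar if it can be drawn
with path-connected sets in place of arcs, such that edges without a common end are disjoint. This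
notion is stable under contraction, a smallest graph exceeding the bound contracts to a smaller one
exceeding it or to `K₅`, and counting turns modulo 2 shows that `K₅` is not weakly planar.
-/

section LogIncrement

/-- `δ` is the total change along `[0, 1]` of a continuous logarithm of `g`. -/
def IsLogIncrement (g : ℝ → ℂ) (δ : ℂ) : Prop :=
  ∃ L : ℝ → ℂ, Continuous L ∧ (∀ t, Complex.exp (L t) = g t) ∧ L 1 - L 0 = δ

theorem exists_continuous_log {X : Type*} [TopologicalSpace X] [SimplyConnectedSpace X]
    [LocallyPathConnectedSpace X] {f : X → ℂ} (hf : Continuous f) (h0 : ∀ x, f x ≠ 0) :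
    ∃ L : X → ℂ, Continuous L ∧ ∀ x, Complex.exp (L x) = f x := by
  obtain ⟨x₀⟩ : Nonempty X := inferInstance
  obtain ⟨F, ⟨-, hF⟩, -⟩ := Complex.isCoveringMapOn_exp.existsUnique_continuousMap_lifts
    ⟨f, hf⟩ (Complex.exp_log (h0 x₀)) (fun x => by simpa using h0 x)
  exact ⟨F, F.continuous, congrFun hF⟩

namespace IsLogIncrement

variable {g : ℝ → ℂ} {δ δ' : ℂ}

theorem exists_of_ne_zero (hg : Continuous g) (h0 : ∀ t, g t ≠ 0) : ∃ δ, IsLogIncrement g δ := by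
  obtain ⟨L, hL, hLg⟩ := exists_continuous_log hg h0
  exact ⟨_, L, hL, hLg, rfl⟩

theorem unique (h : IsLogIncrement g δ) (h' : IsLogIncrement g δ') : δ = δ' := by
  obtain ⟨L, hL, hLg, rfl⟩ := h
  obtain ⟨M, hM, hMg, rfl⟩ := h'
  have hshift : (fun t => M t + (L 0 - M 0)) = L := by
    refine Complex.isCoveringMap_exp.eq_of_comp_eq (by fun_prop) hL ?_ 0 (by simp)
    refine funext fun t => Subtype.ext ?_
    change Complex.exp (M t + (L 0 - M 0)) = Complex.exp (L t)
    have hg0 : g 0 ≠ 0 := hMg 0 ▸ Complex.exp_ne_zero _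
    rw [Complex.exp_add, Complex.exp_sub, hMg, hMg, hLg, hLg, div_self hg0, mul_one]
  rw [← congrFun hshift 1]
  ring

theorem neg (h : IsLogIncrement g δ) : IsLogIncrement (fun t => -g t) δ := by
  obtain ⟨L, hL, hLg, rfl⟩ := h
  refine ⟨fun t => L t + Real.pi * Complex.I, by fun_prop, fun t => ?_, by ring⟩
  rw [Complex.exp_add, hLg, Complex.exp_pi_mul_I, mul_neg_one]

theorem exists_int_eq (h : IsLogIncrement g δ) {z w : ℂ} (hz : Complex.exp z = g 0)
    (hw : Complex.exp w = g 1) : ∃ n : ℤ, δ = w - z + n * (2 * Real.pi * Complex.I) := by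
  obtain ⟨L, -, hLg, rfl⟩ := h
  obtain ⟨m, hm⟩ := Complex.exp_eq_exp_iff_exists_int.mp (hz.trans (hLg 0).symm)
  obtain ⟨n, hn⟩ := Complex.exp_eq_exp_iff_exists_int.mp (hw.trans (hLg 1).symm)
  refine ⟨m - n, ?_⟩
  push_cast
  linear_combination hm - hn

/-- Going around the boundary of the square, a continuous logarithm of `γ s - η t` returns to its
initial value. -/
theorem sub_add_sub_eq_zero {γ η : ℝ → ℂ} (hγ : Continuous γ) (hη : Continuous η)
    (hne : ∀ s t, γ s ≠ η t) {d₁ d₂ d₃ d₄ : ℂ}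
    (h₁ : IsLogIncrement (fun s => γ s - η 0) d₁) (h₂ : IsLogIncrement (fun s => γ s - η 1) d₂)
    (h₃ : IsLogIncrement (fun t => η t - γ 1) d₃) (h₄ : IsLogIncrement (fun t => η t - γ 0) d₄) :
    d₁ - d₂ + d₃ - d₄ = 0 := by
  obtain ⟨L, hL, hLe⟩ := exists_continuous_log (f := fun q : ℝ × ℝ => γ q.1 - η q.2)
    (by fun_prop) (fun q => sub_ne_zero.mpr (hne _ _))
  have e₁ := h₁.unique ⟨fun s => L (s, 0), by fun_prop, fun _ => hLe _, rfl⟩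
  have e₂ := h₂.unique ⟨fun s => L (s, 1), by fun_prop, fun _ => hLe _, rfl⟩
  have e₃ := h₃.neg.unique ⟨fun t => L (1, t), by fun_prop, fun _ => by simp [hLe], rfl⟩
  have e₄ := h₄.neg.unique ⟨fun t => L (0, t), by fun_prop, fun _ => by simp [hLe], rfl⟩
  rw [e₁, e₂, e₃, e₄]
  ring

end IsLogIncrement

end LogIncrement

section CompleteGraphFive

variable {ι : Type*} [LinearOrder ι]

theorem exists_log_sub {p : ι → ℂ} (hp : Function.Injective p) :
    ∃ ℓ : ι → ι → ℂ, (∀ i j, ℓ i j = ℓ j i) ∧ ∀ i j, i ≠ j →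
      Complex.exp (ℓ i j + if j < i then Real.pi * Complex.I else 0) = p i - p j := by
  refine ⟨fun i j => Complex.log (p (min i j) - p (max i j)),
    fun i j => by beta_reduce; rw [min_comm, max_comm], fun i j hij => ?_⟩
  beta_reduce
  rcases hij.lt_or_gt with h | h
  · rw [min_eq_left h.le, max_eq_right h.le, if_neg h.not_gt, add_zero,
      Complex.exp_log (sub_ne_zero.mpr (hp.ne hij))]
  · rw [min_eq_right h.le, max_eq_left h.le, if_pos h, Complex.exp_add, Complex.exp_pi_mul_I,
      Complex.exp_log (sub_ne_zero.mpr (hp.ne hij.symm)), mul_neg_one, neg_sub]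

/-- The number of half-turns made by an arc from `p i` to `p j` around `p c`, when it makes `n`
full turns in excess of the difference of the chosen arguments of `p j - p c` and `p i - p c`. -/
def halfTurns (n : ι → ι → ι → ℤ) (i j c : ι) : ℤ :=
  2 * n i j c + (if c < j then 1 else 0) - if c < i then 1 else 0

theorem exists_halfTurns_eq_zero {p : ι → ℂ} (hp : Function.Injective p) {γ : ι → ι → ℝ → ℂ}
    (hγ : ∀ i j, i ≠ j → Continuous (γ i j) ∧ γ i j 0 = p i ∧ γ i j 1 = p j)
    (hpt : ∀ i j c, i ≠ j → c ≠ i → c ≠ j → ∀ t, γ i j t ≠ p c)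
    (hdisj : ∀ a b c d, a ≠ b → c ≠ d → a ≠ c → a ≠ d → b ≠ c → b ≠ d →
      ∀ s t, γ a b s ≠ γ c d t) :
    ∃ n : ι → ι → ι → ℤ, ∀ a b c d, a ≠ b → c ≠ d → a ≠ c → a ≠ d → b ≠ c → b ≠ d →
      halfTurns n a b c - halfTurns n a b d + halfTurns n c d b - halfTurns n c d a = 0 := by
  have hinc : ∀ i j c, i ≠ j → c ≠ i → c ≠ j →
      ∃ δ, IsLogIncrement (fun s => γ i j s - p c) δ := fun i j c hij hci hcj =>
    IsLogIncrement.exists_of_ne_zero ((hγ i j hij).1.sub continuous_const)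
      fun t => sub_ne_zero.mpr (hpt i j c hij hci hcj t)
  choose! δ hδ using hinc
  obtain ⟨ℓ, hsymm, hexp⟩ := exists_log_sub hp
  have hturn : ∀ i j c, i ≠ j → c ≠ i → c ≠ j → ∃ n : ℤ,
      δ i j c = (ℓ j c + if c < j then Real.pi * Complex.I else 0)
        - (ℓ i c + if c < i then Real.pi * Complex.I else 0) + n * (2 * Real.pi * Complex.I) :=
    fun i j c hij hci hcj => (hδ i j c hij hci hcj).exists_int_eq
      (by rw [hexp i c hci.symm, (hγ i j hij).2.1]) (by rw [hexp j c hcj.symm, (hγ i j hij).2.2])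
  choose! n hn using hturn
  have hhalf : ∀ i j c, i ≠ j → c ≠ i → c ≠ j →
      δ i j c = ℓ j c - ℓ i c + halfTurns n i j c * (Real.pi * Complex.I) := by
    intro i j c hij hci hcj
    rw [hn i j c hij hci hcj, halfTurns]
    split_ifs <;> push_cast <;> ring
  refine ⟨n, fun a b c d hab hcd hac had hbc hbd => ?_⟩
  have hsq := IsLogIncrement.sub_add_sub_eq_zero (hγ a b hab).1 (hγ c d hcd).1
    (hdisj a b c d hab hcd hac had hbc hbd) (d₁ := δ a b c) (d₂ := δ a b d)
    (d₃ := δ c d b) (d₄ := δ c d a)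
    (by rw [(hγ c d hcd).2.1]; exact hδ a b c hab hac.symm hbc.symm)
    (by rw [(hγ c d hcd).2.2]; exact hδ a b d hab had.symm hbd.symm)
    (by rw [(hγ a b hab).2.2]; exact hδ c d b hcd hbc hbd)
    (by rw [(hγ a b hab).2.1]; exact hδ c d a hcd hac had)
  rw [hhalf a b c hab hac.symm hbc.symm, hhalf a b d hab had.symm hbd.symm,
    hhalf c d b hcd hbc hbd, hhalf c d a hcd hac had, hsymm d b, hsymm c b, hsymm d a,
    hsymm c a] at hsq
  refine Int.cast_injective (α := ℂ) (mul_right_cancel₀ (b := Real.pi * Complex.I)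
    (mul_ne_zero (mod_cast Real.pi_ne_zero) Complex.I_ne_zero) ?_)
  push_cast
  linear_combination hsq

/-- Of the three ways to split four vertices into two edges, the interleaved one is odd and the
other two are even. -/
theorem turns_emod_two_of_halfTurns_eq_zero {n : ι → ι → ι → ℤ}
    (hn : ∀ a b c d, a ≠ b → c ≠ d → a ≠ c → a ≠ d → b ≠ c → b ≠ d →
      halfTurns n a b c - halfTurns n a b d + halfTurns n c d b - halfTurns n c d a = 0)
    {i j k l : ι} (hij : i < j) (hjk : j < k) (hkl : k < l) :
    (n i j k + n i j l + n k l i + n k l j + (n i k j + n i k l + n j l i + n j l k)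
      + (n i l j + n i l k + n j k i + n j k l)) % 2 = 1 := by
  have hik := hij.trans hjk
  have hjl := hjk.trans hkl
  have hil := hij.trans hjl
  have h₁ := hn i j k l hij.ne hkl.ne hik.ne hil.ne hjk.ne hjl.ne
  have h₂ := hn i k j l hik.ne hjl.ne hij.ne hil.ne hjk.ne' hkl.ne
  have h₃ := hn i l j k hil.ne hjk.ne hij.ne hik.ne hjl.ne' hkl.ne'
  simp only [halfTurns, hij, hjk, hkl, hik, hjl, hil, hij.not_gt, hjk.not_gt, hkl.not_gt,
    hik.not_gt, hjl.not_gt, hil.not_gt, if_true, if_false] at h₁ h₂ h₃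
  omega

/-- Each number of turns is counted in two of the five quadruples of vertices, but each quadruple
has an odd sum. -/
theorem exists_not_disjoint_of_joinedIn (p : Fin 5 → ℂ) (A : Sym2 (Fin 5) → Set ℂ)
    (hA : ∀ i j, i ≠ j → JoinedIn (A s(i, j)) (p i) (p j)) :
    ∃ a b c d, a ≠ b ∧ c ≠ d ∧ a ≠ c ∧ a ≠ d ∧ b ≠ c ∧ b ≠ d ∧
      ¬Disjoint (A s(a, b)) (A s(c, d)) := by
  by_contra! hdisj
  have hpath : ∀ i j, i ≠ j → ∃ γ : ℝ → ℂ, (Continuous γ ∧ γ 0 = p i ∧ γ 1 = p j) ∧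
      ∀ t, γ t ∈ A s(i, j) := fun i j hij => by
    obtain ⟨γ, hγ⟩ := hA i j hij
    exact ⟨γ.extend, ⟨γ.continuous_extend, by simp, by simp⟩, fun t => hγ _⟩
  choose! γ hγ hmem using hpath
  have hne : ∀ a b c d, a ≠ b → c ≠ d → a ≠ c → a ≠ d → b ≠ c → b ≠ d →
      ∀ s t, γ a b s ≠ γ c d t := fun a b c d hab hcd hac had hbc hbd s t =>
    (hdisj a b c d hab hcd hac had hbc hbd).ne_of_mem (hmem a b hab s) (hmem c d hcd t)
  have hfourth : ∀ i j c : Fin 5, ∃ d, d ≠ i ∧ d ≠ j ∧ d ≠ c := by decide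
  have hpt : ∀ i j c, i ≠ j → c ≠ i → c ≠ j → ∀ t, γ i j t ≠ p c := by
    intro i j c hij hci hcj t
    obtain ⟨d, hdi, hdj, hdc⟩ := hfourth i j c
    rw [← (hγ c d hdc.symm).2.1]
    exact hne i j c d hij hdc.symm hci.symm hdi.symm hcj.symm hdj.symm t 0
  have hp : Function.Injective p := by
    intro i j hpij
    by_contra hij
    obtain ⟨k, hki, hkj, -⟩ := hfourth i j i
    exact hpt i k j hki.symm (Ne.symm hij) hkj.symm 0 ((hγ i k hki.symm).2.1.trans hpij)
  obtain ⟨n, hn⟩ := exists_halfTurns_eq_zero hp hγ hpt hne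
  have h₀ := turns_emod_two_of_halfTurns_eq_zero hn (i := 1) (j := 2) (k := 3) (l := 4)
    (by decide) (by decide) (by decide)
  have h₁ := turns_emod_two_of_halfTurns_eq_zero hn (i := 0) (j := 2) (k := 3) (l := 4)
    (by decide) (by decide) (by decide)
  have h₂ := turns_emod_two_of_halfTurns_eq_zero hn (i := 0) (j := 1) (k := 3) (l := 4)
    (by decide) (by decide) (by decide)
  have h₃ := turns_emod_two_of_halfTurns_eq_zero hn (i := 0) (j := 1) (k := 2) (l := 4)
    (by decide) (by decide) (by decide)
  have h₄ := turns_emod_two_of_halfTurns_eq_zero hn (i := 0) (j := 1) (k := 2) (l := 3)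
    (by decide) (by decide) (by decide)
  omega

end CompleteGraphFive

section WeakPlanarity

variable {V W : Type*} {G H : SimpleGraph V}

/-- A graph is weakly planar if it can be mapped to the plane, vertices to points and edges to sets
joining the points of their ends, so that edges without a common end are disjoint. Edges with a
common end may meet anywhere, which makes the notion stable under contraction. -/
def WeaklyPlanar (G : SimpleGraph V) : Prop :=
  ∃ (p : V → ℝ × ℝ) (A : Sym2 V → Set (ℝ × ℝ)),
    (∀ u v, G.Adj u v → JoinedIn (A s(u, v)) (p u) (p v)) ∧
    ∀ e ∈ G.edgeSet, ∀ f ∈ G.edgeSet, (∀ v ∈ e, v ∉ f) → Disjoint (A e) (A f)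

theorem WeaklyPlanar.mono (hG : WeaklyPlanar G) (h : H ≤ G) : WeaklyPlanar H := by
  obtain ⟨p, A, hjoin, hdisj⟩ := hG
  have hE := SimpleGraph.edgeSet_mono h
  exact ⟨p, A, fun u v huv => hjoin u v (h huv),
    fun e he f hf => hdisj e (hE he) f (hE hf)⟩

theorem WeaklyPlanar.cliqueFree_five (hG : WeaklyPlanar G) : G.CliqueFree 5 := by
  obtain ⟨p, A, hjoin, hdisj⟩ := hG
  by_contra hclique
  obtain ⟨q⟩ := (SimpleGraph.not_cliqueFree_iff_top_isContained 5).mp hclique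
  have hadj : ∀ i j, i ≠ j → G.Adj (q i) (q j) := fun i j hij => q.toHom.map_adj hij
  let φ := Complex.equivRealProdCLM.symm
  obtain ⟨a, b, c, d, hab, hcd, hac, had, hbc, hbd, hnot⟩ :=
    exists_not_disjoint_of_joinedIn (fun i => φ (p (q i))) (fun e => φ '' A (e.map q))
      (fun i j hij => JoinedIn.map (hjoin _ _ (hadj i j hij)) φ.continuous)
  refine hnot ((disjoint_image_iff φ.injective).mpr
    (hdisj _ (hadj a b hab) _ (hadj c d hcd) ?_))
  simp [(hadj _ _ hac).ne, (hadj _ _ had).ne, (hadj _ _ hbc).ne, (hadj _ _ hbd).ne]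

/-- A set drawn for an edge of the image is made of all edges of `G` that are mapped into it,
including those collapsed to one of its ends. -/
theorem WeaklyPlanar.map (hG : WeaklyPlanar G) {f : V → W} {g : W → V}
    (hfg : Function.LeftInverse f g)
    (hadj : ∀ u v, G.Adj u v → g (f u) = u ∨ G.Adj u (g (f u))) : WeaklyPlanar (G.map f) := by
  obtain ⟨p, A, hjoin, hdisj⟩ := hG
  let B (e : Sym2 W) : Set (ℝ × ℝ) := ⋃ d ∈ {d ∈ G.edgeSet | ∀ v ∈ d, f v ∈ e}, A d
  have hsub : ∀ {u v e}, G.Adj u v → f u ∈ e → f v ∈ e → A s(u, v) ⊆ B e :=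
    fun {u v e} huv hu hv => subset_biUnion_of_mem (u := A) ⟨huv, by simp [hu, hv]⟩
  have hfibre : ∀ {u v e}, G.Adj u v → f u ∈ e → f v ∈ e → JoinedIn (B e) (p u) (p (g (f u))) := by
    intro u v e huv hu hv
    rcases hadj u v huv with heq | hug
    · rw [heq]
      exact .refl (hsub huv hu hv (hjoin u v huv).source_mem)
    · exact (hjoin _ _ hug).mono (hsub hug hu (by rwa [hfg]))
  refine ⟨p ∘ g, B, ?_, fun e _ e' _ hee' => ?_⟩
  · rintro _ _ ⟨-, u, v, huv, rfl, rfl⟩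
    have hu : f u ∈ s(f u, f v) := Sym2.mem_mk_left _ _
    have hv : f v ∈ s(f u, f v) := Sym2.mem_mk_right _ _
    exact (hfibre huv hu hv).symm.trans (((hjoin u v huv).mono (hsub huv hu hv)).trans
      (hfibre huv.symm hv hu))
  · refine disjoint_iUnion₂_left.mpr fun d hd => disjoint_iUnion₂_right.mpr fun d' hd' => ?_
    exact hdisj d hd.1 d' hd'.1 fun v hv hv' => hee' _ (hd.2 v hv) (hd'.2 v hv')

end WeakPlanarity

section Contraction

variable {V : Type*} [DecidableEq V] {G : SimpleGraph V} {v : V}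

/-- The map identifying the vertex `v` with `x` and fixing all others. Its image graph
`G.map (contractInto x)` is the contraction of the edge between `v` and `x`. -/
def contractInto (x : {y // y ≠ v}) (y : V) : {y // y ≠ v} :=
  if h : y = v then x else ⟨y, h⟩

theorem contractInto_self (x : {y // y ≠ v}) : contractInto x v = x := dif_pos rfl

theorem contractInto_of_ne (x : {y // y ≠ v}) {y : V} (h : y ≠ v) : contractInto x y = ⟨y, h⟩ :=
  dif_neg h

theorem contractInto_eq_iff {x : {y // y ≠ v}} {a b : V} :
    contractInto x a = contractInto x b ↔ a = b ∨ (a = v ∧ b = x) ∨ (a = x ∧ b = v) := by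
  unfold contractInto
  grind

theorem WeaklyPlanar.contract (hG : WeaklyPlanar G) {x : {y // y ≠ v}}
    (hx : ∀ y, G.Adj v y → G.Adj v x) : WeaklyPlanar (G.map (contractInto x)) := by
  refine hG.map (g := Subtype.val) (fun y => contractInto_of_ne x y.2) fun u y huy => ?_
  by_cases hu : u = v
  · subst hu
    exact .inr ((contractInto_self x).symm ▸ hx y huy)
  · exact .inl (by rw [contractInto_of_ne x hu])

theorem ncard_edgeSet_le_contract [Finite V] (G : SimpleGraph V) (x : {y // y ≠ v}) :
    G.edgeSet.ncard ≤ (G.map (contractInto x)).edgeSet.ncard +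
      {y | G.Adj v y ∧ (y = x ∨ G.Adj x y)}.ncard := by
  set C := {y | G.Adj v y ∧ (y = x ∨ G.Adj x y)}
  have hlift : (G.edgeSet \ ((fun y => s(v, y)) '' C)).ncard ≤
      (G.map (contractInto x)).edgeSet.ncard := by
    refine ncard_le_ncard_of_injOn (Sym2.map (contractInto x)) ?_ ?_
    · intro e he
      induction e with | _ a b
      obtain ⟨hab, hC⟩ := he
      rw [SimpleGraph.mem_edgeSet] at hab
      refine (SimpleGraph.mem_edgeSet _).mpr (SimpleGraph.map_adj_apply' hab fun heq => hC ?_)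
      rcases contractInto_eq_iff.mp heq with h | ⟨rfl, rfl⟩ | ⟨rfl, rfl⟩
      · exact absurd h hab.ne
      · exact ⟨x, ⟨hab, .inl rfl⟩, rfl⟩
      · exact ⟨x, ⟨hab.symm, .inl rfl⟩, Sym2.eq_swap⟩
    · intro e he e' he' heq
      induction e with | _ a b
      induction e' with | _ c d
      have hab : G.Adj a b := he.1
      have hcd : G.Adj c d := he'.1
      have hC := he.2
      have hC' := he'.2
      simp only [C, mem_image, mem_ofPred_eq, Sym2.eq_iff, not_exists, not_and] at hC hC'
      simp only [Sym2.map_mk, Sym2.eq_iff, contractInto_eq_iff] at heq ⊢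
      grind [SimpleGraph.Adj.symm, SimpleGraph.Adj.ne]
  exact (tsub_le_iff_right.mp (le_ncard_sdiff _ _)).trans (add_le_add hlift ncard_image_le)

end Contraction

section EdgeBound

variable {V : Type*} {G : SimpleGraph V} {v : V}

theorem exists_ncard_neighborSet_le_five [Finite V] (h : G.edgeSet.ncard < 3 * Nat.card V) :
    ∃ v, (G.neighborSet v).ncard ≤ 5 := by
  classical
  have := Fintype.ofFinite V
  rw [← SimpleGraph.coe_edgeFinset, ncard_coe_finset, Nat.card_eq_fintype_card] at h
  have hsum : ∑ v, G.degree v < ∑ _v : V, 6 := by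
    rw [G.sum_degrees_eq_twice_card_edges, Finset.sum_const, Finset.card_univ, smul_eq_mul]
    omega
  obtain ⟨v, -, hv⟩ := Finset.exists_lt_of_sum_lt hsum
  refine ⟨v, ?_⟩
  rw [← SimpleGraph.coe_neighborFinset, ncard_coe_finset, SimpleGraph.card_neighborFinset_eq_degree]
  exact Nat.le_of_lt_succ hv

/-- Contracting the edge `ac` makes `v, b, c, d, e` pairwise adjacent. -/
theorem WeaklyPlanar.not_adj_of_forall_adj (hG : WeaklyPlanar G) {a b c d e : V} (hab : a ≠ b)
    (hac : G.Adj a c) (had : G.Adj a d) (hae : G.Adj a e) (hbc : G.Adj b c) (hbd : G.Adj b d)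
    (hbe : G.Adj b e) (hcd : c ≠ d) (hce : c ≠ e)
    (hv : ∀ y ∈ ({a, b, c, d, e} : Set V), G.Adj v y) : ¬G.Adj d e := by
  classical
  intro hde
  simp only [mem_insert_iff, mem_singleton_iff, forall_eq_or_imp, forall_eq] at hv
  obtain ⟨hva, hvb, hvc, hvd, hve⟩ := hv
  let x : {y // y ≠ a} := ⟨c, hac.ne'⟩
  let f := contractInto x
  have hmap : ∀ {y z}, G.Adj y z → y ≠ a → z ≠ a → (G.map f).Adj (f y) (f z) :=
    fun hyz hy hz => SimpleGraph.map_adj_apply' hyz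
      (contractInto_eq_iff.not.mpr (by grind [SimpleGraph.Adj.ne]))
  have hfc : f a = f c := contractInto_eq_iff.mpr (.inr (.inl ⟨rfl, rfl⟩))
  have hmap_a : ∀ {z}, G.Adj a z → c ≠ z → (G.map f).Adj (f c) (f z) := fun haz hcz =>
    hfc ▸ SimpleGraph.map_adj_apply' haz
      (contractInto_eq_iff.not.mpr (by grind [SimpleGraph.Adj.ne]))
  have hcde : (G.map f).IsNClique 3 {f c, f d, f e} :=
    SimpleGraph.is3Clique_triple_iff.mpr
      ⟨hmap_a had hcd, hmap_a hae hce, hmap hde had.ne' hae.ne'⟩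
  have hbcde := hcde.insert (a := f b) <| by
    simp only [Finset.mem_insert, Finset.mem_singleton, forall_eq_or_imp, forall_eq]
    exact ⟨hmap hbc hab.symm hac.ne', hmap hbd hab.symm had.ne', hmap hbe hab.symm hae.ne'⟩
  refine (hG.contract (v := a) (x := x) fun _ _ => hac).cliqueFree_five _
    (hbcde.insert (a := f v) ?_)
  simp only [Finset.mem_insert, Finset.mem_singleton, forall_eq_or_imp, forall_eq]
  exact ⟨hmap hvb hva.ne hab.symm, hmap hvc hva.ne hac.ne', hmap hvd hva.ne had.ne',
    hmap hve hva.ne hae.ne'⟩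

theorem WeaklyPlanar.not_isClique_neighborSet [Finite V] (hG : WeaklyPlanar G)
    (h : 4 ≤ (G.neighborSet v).ncard) : ¬G.IsClique (G.neighborSet v) := by
  intro hclique
  have hv : G.IsNClique ((G.neighborSet v).ncard + 1)
      (insert v (G.neighborSet v)).toFinite.toFinset := by
    rw [SimpleGraph.isNClique_iff, Finite.coe_toFinset, ← ncard_eq_toFinset_card,
      ncard_insert_of_notMem (s := G.neighborSet v) G.irrefl]
    exact ⟨hclique.insert fun y hy _ => hy, rfl⟩
  exact hG.cliqueFree_five.mono (Nat.succ_le_succ h) _ hv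

theorem exists_ncard_neighborSet_sdiff_eq_three [Finite V] (h5 : (G.neighborSet v).ncard ≤ 5)
    (hcommon : ∀ x, G.Adj v x → 2 < {y | G.Adj v y ∧ G.Adj x y}.ncard)
    (hclique : ¬G.IsClique (G.neighborSet v)) :
    ∃ a b, a ≠ b ∧ G.Adj v a ∧ G.Adj v b ∧ (G.neighborSet v \ {a, b}).ncard = 3 ∧
      ∀ y ∈ G.neighborSet v \ {a, b}, G.Adj a y ∧ G.Adj b y := by
  obtain ⟨a, ha, b, hb, hab, hnab⟩ :
      ∃ a ∈ G.neighborSet v, ∃ b ∈ G.neighborSet v, a ≠ b ∧ ¬G.Adj a b := by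
    simpa [SimpleGraph.IsClique, Set.Pairwise] using hclique
  have hT : (G.neighborSet v \ {a, b}).ncard ≤ 3 := by
    rw [ncard_sdiff (pair_subset ha hb), ncard_pair hab]
    omega
  have hcommon_eq : ∀ z, z = a ∨ z = b →
      {y | G.Adj v y ∧ G.Adj z y} = G.neighborSet v \ {a, b} := by
    intro z hz
    refine eq_of_subset_of_ncard_le (fun y hy => ⟨hy.1, ?_⟩)
      (hT.trans (hcommon z (hz.elim (· ▸ ha) (· ▸ hb))))
    have hzy := hy.2
    grind [SimpleGraph.Adj.symm, SimpleGraph.irrefl]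
  have haT := hcommon_eq a (.inl rfl)
  have hbT := hcommon_eq b (.inr rfl)
  exact ⟨a, b, hab, ha, hb, hT.antisymm (haT ▸ hcommon a ha),
    fun y hy => ⟨(haT.symm.subset hy).2, (hbT.symm.subset hy).2⟩⟩

theorem WeaklyPlanar.exists_adj_ncard_common_le_two [Finite V] (hG : WeaklyPlanar G)
    (h5 : (G.neighborSet v).ncard ≤ 5) (hne : (G.neighborSet v).Nonempty) :
    ∃ x, G.Adj v x ∧ {y | G.Adj v y ∧ G.Adj x y}.ncard ≤ 2 := by
  by_contra! hcommon
  have h4 : 4 ≤ (G.neighborSet v).ncard := by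
    obtain ⟨x, hx⟩ := hne
    have hsub : insert x {y | G.Adj v y ∧ G.Adj x y} ⊆ G.neighborSet v :=
      insert_subset hx fun y hy => hy.1
    have hcard := ncard_le_ncard hsub
    rw [ncard_insert_of_notMem fun h => G.irrefl h.2] at hcard
    exact (Nat.succ_le_succ (hcommon x hx)).trans hcard
  obtain ⟨a, b, hab, ha, hb, hT, hadj⟩ :=
    exists_ncard_neighborSet_sdiff_eq_three h5 hcommon (hG.not_isClique_neighborSet h4)
  obtain ⟨c, d, e, hcd, hce, hde, hcde⟩ := ncard_eq_three.mp hT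
  have hv : ∀ t ∈ ({c, d, e} : Set V), G.Adj v t := fun t ht => (hcde.symm.subset ht).1
  rw [hcde] at hadj
  obtain ⟨y, ⟨hvy, hcy⟩, hyab⟩ : ∃ y ∈ {y | G.Adj v y ∧ G.Adj c y}, y ∉ ({a, b} : Set V) :=
    exists_mem_notMem_of_ncard_lt_ncard
      ((ncard_pair hab).trans_lt (hcommon c (hv c (mem_insert _ _))))
  have hy : y ∈ ({c, d, e} : Set V) := hcde.subset ⟨hvy, hyab⟩
  simp only [mem_insert_iff, mem_singleton_iff, forall_eq_or_imp, forall_eq] at hadj hy hv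
  obtain ⟨⟨hac, hbc⟩, ⟨had, hbd⟩, ⟨hae, hbe⟩⟩ := hadj
  rcases hy with rfl | rfl | rfl
  · exact G.irrefl hcy
  · exact hG.not_adj_of_forall_adj hab hae hac had hbe hbc hbd hce.symm hde.symm (v := v)
      (by aesop) hcy
  · exact hG.not_adj_of_forall_adj hab had hac hae hbd hbc hbe hcd.symm hde (v := v)
      (by aesop) hcy

theorem WeaklyPlanar.exists_contractible [Finite V] (hG : WeaklyPlanar G)
    (hV : 1 < Nat.card V) (hE : G.edgeSet.ncard < 3 * Nat.card V) :
    ∃ (v : V) (x : {y // y ≠ v}), (∀ y, G.Adj v y → G.Adj v x) ∧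
      {y | G.Adj v y ∧ (y = x ∨ G.Adj x y)}.ncard ≤ 3 := by
  obtain ⟨v, hv⟩ := exists_ncard_neighborSet_le_five hE
  rcases (G.neighborSet v).eq_empty_or_nonempty with hempty | hne
  · have hnot : ∀ y, ¬G.Adj v y := eq_empty_iff_forall_notMem.mp hempty
    have := Finite.one_lt_card_iff_nontrivial.mp hV
    obtain ⟨x, hx⟩ := exists_ne v
    exact ⟨v, ⟨x, hx⟩, fun y hy => absurd hy (hnot y), by simp [hnot]⟩
  · obtain ⟨x, hvx, hx⟩ := hG.exists_adj_ncard_common_le_two hv hne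
    refine ⟨v, ⟨x, hvx.ne'⟩, fun _ _ => hvx, ?_⟩
    refine (ncard_le_ncard (t := insert x {y | G.Adj v y ∧ G.Adj x y}) ?_).trans
      ((ncard_insert_le _ _).trans (Nat.succ_le_succ hx))
    rintro y ⟨hvy, rfl | hxy⟩
    · exact mem_insert _ _
    · exact mem_insert_of_mem _ ⟨hvy, hxy⟩

theorem edgeSet_fromEdgeSet_of_forall_not_isDiag {F : Set (Sym2 V)} (hF : ∀ e ∈ F, ¬e.IsDiag) :
    (SimpleGraph.fromEdgeSet F).edgeSet = F := by
  rw [SimpleGraph.edgeSet_fromEdgeSet]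
  exact sdiff_eq_left.mpr (disjoint_left.mpr hF)

theorem exists_le_ncard_edgeSet_eq (G : SimpleGraph V) {m : ℕ} (hm : m ≤ G.edgeSet.ncard) :
    ∃ H ≤ G, H.edgeSet.ncard = m := by
  obtain ⟨s, hs, hcard⟩ := exists_subset_card_eq hm
  refine ⟨.fromEdgeSet s, fun a b h => hs h.1, ?_⟩
  rwa [edgeSet_fromEdgeSet_of_forall_not_isDiag fun e he => G.not_isDiag_of_mem_edgeSet (hs he)]

/-- If the bound fails for `G`, it fails for a subgraph exceeding it by exactly one edge, which has
a vertex of degree at most five, and then for a contraction of that subgraph. -/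
theorem WeaklyPlanar.ncard_edgeSet_add_six_le [Finite V] (hG : WeaklyPlanar G)
    (h3 : 3 ≤ Nat.card V) : G.edgeSet.ncard + 6 ≤ 3 * Nat.card V := by
  classical
  obtain ⟨n, hn⟩ := Nat.exists_eq_add_of_le h3
  induction n generalizing V with
  | zero =>
    have := Fintype.ofFinite V
    have hchoose := G.card_edgeFinset_le_card_choose_two
    rw [← Nat.card_eq_fintype_card, hn, ← ncard_coe_finset, SimpleGraph.coe_edgeFinset] at hchoose
    rw [hn]
    exact Nat.add_le_add_right hchoose 6
  | succ n ih =>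
    by_contra! hlt
    obtain ⟨H, hHG, hH⟩ := exists_le_ncard_edgeSet_eq G (m := 3 * Nat.card V - 5) (by omega)
    have hHplanar := hG.mono hHG
    obtain ⟨v, x, hx, hcommon⟩ := hHplanar.exists_contractible (by omega) (by omega)
    have hcard : Nat.card {y // y ≠ v} = 3 + n := by
      have := Fintype.ofFinite V
      rw [Nat.card_eq_fintype_card, Fintype.card_subtype_compl, Fintype.card_subtype_eq,
        ← Nat.card_eq_fintype_card, hn]
      omega
    have hcontract := ih (hHplanar.contract hx) (by omega) hcard
    have hle := ncard_edgeSet_le_contract H x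
    omega

theorem ncard_add_six_le_of_joinedIn [Finite V] (h3 : 3 ≤ Nat.card V) {F : Set (Sym2 V)}
    (hF : ∀ e ∈ F, ¬e.IsDiag) (p : V → ℝ × ℝ) (A : Sym2 V → Set (ℝ × ℝ))
    (hjoin : ∀ u v, s(u, v) ∈ F → JoinedIn (A s(u, v)) (p u) (p v))
    (hdisj : ∀ e ∈ F, ∀ f ∈ F, (∀ v ∈ e, v ∉ f) → Disjoint (A e) (A f)) :
    F.ncard + 6 ≤ 3 * Nat.card V := by
  have hedge := edgeSet_fromEdgeSet_of_forall_not_isDiag hF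
  have hplanar : WeaklyPlanar (.fromEdgeSet F) :=
    ⟨p, A, fun u v huv => hjoin u v huv.1, by rwa [hedge]⟩
  simpa only [hedge] using hplanar.ncard_edgeSet_add_six_le h3

end EdgeBound

theorem joinedIn_image_Icc {X : Type*} [TopologicalSpace X] {γ : ℝ → X} {a b : ℝ}
    (hab : a ≤ b) (hγ : ContinuousOn γ (Icc a b)) : JoinedIn (γ '' Icc a b) (γ a) (γ b) :=
  (((convex_Icc a b).isPathConnected ⟨a, left_mem_Icc.mpr hab⟩).image' hγ).joinedIn _
    (mem_image_of_mem γ (left_mem_Icc.mpr hab)) _ (mem_image_of_mem γ (right_mem_Icc.mpr hab))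

namespace Drawing

variable {V : Type} {G : SimpleGraph V} {D : Drawing G} {e f : Sym2 V} {x : ℝ × ℝ}

/-- The arc of an abstract edge, including its end points. -/
def edgeArc (D : Drawing G) (e : Sym2 V) : Set (ℝ × ℝ) :=
  {x | ∃ (u v : V) (h : G.Adj u v), e = s(u, v) ∧ x ∈ D.arc h}

theorem edgeArc_mk {u v : V} (h : G.Adj u v) : D.edgeArc s(u, v) = D.arc h := by
  refine Subset.antisymm ?_ fun x hx => ⟨u, v, h, rfl, hx⟩
  rintro x ⟨a, b, hab, heq, hx⟩
  rcases Sym2.eq_iff.mp heq with ⟨rfl, rfl⟩ | ⟨rfl, rfl⟩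
  · exact hx
  · rwa [D.arc_symm h] at hx

theorem mem_edgeInt_iff : x ∈ D.edgeInt e ↔ x ∈ D.edgeArc e ∧ ∀ v ∈ e, x ≠ D.pos v := by
  constructor
  · rintro ⟨u, v, h, rfl, hx, hne⟩
    exact ⟨⟨u, v, h, rfl, hx⟩, by simpa using hne⟩
  · rintro ⟨⟨u, v, h, rfl, hx⟩, hne⟩
    exact ⟨u, v, h, rfl, hx, by simpa using hne⟩

theorem edgeInt_mk {u v : V} (h : G.Adj u v) : D.edgeInt s(u, v) = D.arcInt h := by
  ext x
  rw [mem_edgeInt_iff, edgeArc_mk h]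
  simp [arcInt]

theorem mem_edgeSet_of_mem_edgeInt (hx : x ∈ D.edgeInt e) : e ∈ G.edgeSet := by
  obtain ⟨u, v, h, rfl, -⟩ := hx
  exact h

theorem Cross.symm (h : D.Cross e f) : D.Cross f e := ⟨h.1.symm, inter_comm _ _ ▸ h.2⟩

theorem Cross.left_mem (h : D.Cross e f) : e ∈ G.edgeSet :=
  mem_edgeSet_of_mem_edgeInt h.2.some_mem.1

theorem IsGood.mem_of_pos_mem_edgeArc (hD : D.IsGood) {w : V} (h : D.pos w ∈ D.edgeArc e) :
    w ∈ e := by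
  obtain ⟨u, v, huv, rfl, hw⟩ := h
  exact Sym2.mem_iff.mpr (hD.1 w huv hw)

theorem IsGood.cross_of_mem_edgeArc (hD : D.IsGood) (hef : e ≠ f) (he : x ∈ D.edgeArc e)
    (hf : x ∈ D.edgeArc f) (hx : ∀ v ∈ e, v ∈ f → x ≠ D.pos v) : D.Cross e f := by
  refine ⟨hef, x, mem_edgeInt_iff.mpr ⟨he, ?_⟩, mem_edgeInt_iff.mpr ⟨hf, ?_⟩⟩
  · rintro v hv rfl
    exact hx v hv (hD.mem_of_pos_mem_edgeArc hf) rfl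
  · rintro v hv rfl
    exact hx v (hD.mem_of_pos_mem_edgeArc he) hv rfl

theorem IsGood.disjoint_edgeArc (hD : D.IsGood) (hvtx : ∀ v ∈ e, v ∉ f) (hef : ¬D.Cross e f) :
    Disjoint (D.edgeArc e) (D.edgeArc f) :=
  disjoint_left.mpr fun _ he hf => hef <| hD.cross_of_mem_edgeArc
    (fun h => hvtx _ e.out_fst_mem (h ▸ e.out_fst_mem)) he hf fun v hve hvf =>
      absurd hvf (hvtx v hve)

theorem joinedIn_edgeArc {u v : V} (h : G.Adj u v) :
    JoinedIn (D.edgeArc s(u, v)) (D.pos u) (D.pos v) := by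
  obtain ⟨γ, hγ, -, h0, h1, harc⟩ := D.arc_isArc h
  rw [edgeArc_mk h, harc, ← h0, ← h1]
  exact joinedIn_image_Icc zero_le_one hγ

theorem exists_joinedIn_subset_edgeArc {u v : V} (hx : x ∈ D.edgeInt s(u, v)) :
    ∃ T ⊆ D.edgeArc s(u, v), JoinedIn T (D.pos u) x ∧ D.pos v ∉ T := by
  have h := mem_edgeSet_of_mem_edgeInt hx
  rw [edgeInt_mk h] at hx
  rw [edgeArc_mk h]
  obtain ⟨hxarc, hne⟩ := hx
  obtain ⟨γ, hγ, hinj, h0, h1, harc⟩ := D.arc_isArc h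
  rw [harc] at hxarc ⊢
  obtain ⟨t, ht, rfl⟩ := hxarc
  have hsub : Icc 0 t ⊆ Icc (0 : ℝ) 1 := Icc_subset_Icc_right ht.2
  refine ⟨γ '' Icc 0 t, image_mono hsub, h0 ▸ joinedIn_image_Icc ht.1 (hγ.mono hsub), ?_⟩
  rintro ⟨s, hs, hs1⟩
  have h1s : s = 1 := hinj (hsub hs) (right_mem_Icc.mpr zero_le_one) (hs1.trans h1.symm)
  have ht1 : t = 1 := le_antisymm ht.2 (h1s ▸ hs.2)
  exact hne (.inr (ht1 ▸ h1))

theorem IsGood.ncard_add_six_le [Finite V] (hD : D.IsGood) (h3 : 3 ≤ Nat.card V) {F : Set (Sym2 V)}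
    (hF : F ⊆ G.edgeSet) (hcross : ∀ e ∈ F, ∀ f ∈ F, ¬D.Cross e f) :
    F.ncard + 6 ≤ 3 * Nat.card V :=
  ncard_add_six_le_of_joinedIn h3 (fun _ he => G.not_isDiag_of_mem_edgeSet (hF he)) D.pos D.edgeArc
    (fun _ _ h => joinedIn_edgeArc (hF h))
    fun e he f hf hef => hD.disjoint_edgeArc hef (hcross e he f hf)

/-- The new arc follows the two crossing edges and changes from one to the other at their crossing
point. -/
theorem IsGood.exists_joinedIn_of_cross (hD : D.IsGood) (hone : D.IsOnePlanar) {p q r s : V}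
    (hx : D.Cross s(p, r) s(q, s)) : ∃ T, JoinedIn T (D.pos p) (D.pos q) ∧
      ∀ e, p ∉ e → q ∉ e → Disjoint T (D.edgeArc e) := by
  obtain ⟨x, hxpr, hxqs⟩ := hx.2
  obtain ⟨P, hPsub, hP, hrP⟩ := exists_joinedIn_subset_edgeArc hxpr
  obtain ⟨Q, hQsub, hQ, hsQ⟩ := exists_joinedIn_subset_edgeArc hxqs
  have hdisj : ∀ {a b : V} {T : Set (ℝ × ℝ)} {e : Sym2 V}, T ⊆ D.edgeArc s(a, b) →
      D.pos b ∉ T → a ∉ e → ¬D.Cross s(a, b) e → Disjoint T (D.edgeArc e) := by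
    intro a b T e hT hb ha hcross
    refine disjoint_left.mpr fun y hy hye => hcross <| hD.cross_of_mem_edgeArc
      (fun h => ha (h ▸ Sym2.mem_mk_left a b)) (hT hy) hye fun v hv hve => ?_
    rintro rfl
    rcases Sym2.mem_iff.mp hv with rfl | rfl
    · exact ha hve
    · exact hb hy
  refine ⟨P ∪ Q, (hP.mono subset_union_left).trans (hQ.symm.mono subset_union_right), ?_⟩
  refine fun e hp hq => disjoint_union_left.mpr ⟨hdisj hPsub hrP hp fun h => hq ?_,
    hdisj hQsub hsQ hq fun h => hp ?_⟩
  · exact hone _ h hx ▸ Sym2.mem_mk_left q s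
  · exact hone _ h hx.symm ▸ Sym2.mem_mk_left p r

/-- The edge `pq` may be redrawn along the crossing edges `pr` and `qs`, which removes its
crossings. -/
theorem IsGood.ncard_add_six_le_of_reroute [Finite V] (hD : D.IsGood) (hone : D.IsOnePlanar)
    (h3 : 3 ≤ Nat.card V) {F : Set (Sym2 V)} (hF : F ⊆ G.edgeSet) {p q r s : V}
    (hx : D.Cross s(p, r) s(q, s))
    (hcross : ∀ e ∈ F, ∀ f ∈ F, e ≠ s(p, q) → f ≠ s(p, q) → ¬D.Cross e f) :
    F.ncard + 6 ≤ 3 * Nat.card V := by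
  classical
  obtain ⟨T, hT, hdisj⟩ := hD.exists_joinedIn_of_cross hone hx
  refine ncard_add_six_le_of_joinedIn h3 (fun _ he => G.not_isDiag_of_mem_edgeSet (hF he)) D.pos
    (Function.update D.edgeArc s(p, q) T) (fun u v huv => ?_) fun e he f hf hef => ?_
  · by_cases heq : s(u, v) = s(p, q)
    · rw [heq, Function.update_self]
      rcases Sym2.eq_iff.mp heq with ⟨rfl, rfl⟩ | ⟨rfl, rfl⟩
      exacts [hT, hT.symm]
    · rw [Function.update_of_ne heq]
      exact joinedIn_edgeArc (hF huv)
  · have hne : ∀ {v}, v ∈ e → v ∉ f := fun {v} => hef v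
    by_cases hepq : e = s(p, q) <;> by_cases hfpq : f = s(p, q)
    · exact absurd (hfpq ▸ Sym2.mem_mk_left p q) (hne (hepq ▸ Sym2.mem_mk_left p q))
    · rw [hepq, Function.update_self, Function.update_of_ne hfpq]
      exact hdisj f (hne (hepq ▸ Sym2.mem_mk_left p q)) (hne (hepq ▸ Sym2.mem_mk_right p q))
    · rw [hfpq, Function.update_self, Function.update_of_ne hepq, disjoint_comm]
      exact hdisj e (fun h => hne h (hfpq ▸ Sym2.mem_mk_left p q))
        fun h => hne h (hfpq ▸ Sym2.mem_mk_right p q)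
    · rw [Function.update_of_ne hepq, Function.update_of_ne hfpq]
      exact hD.disjoint_edgeArc hef (hcross e he f hf hepq hfpq)

/-- In a maximal crossing-free set of edges each further edge has a crossing partner. -/
theorem IsGood.ncard_edgeSet_add_six_le [Finite V] (hD : D.IsGood) (h3 : 3 ≤ Nat.card V) :
    G.edgeSet.ncard + 6 ≤ 3 * Nat.card V + D.crNum := by
  obtain ⟨F, ⟨hFG, hF⟩, hmax⟩ := (toFinite {F : Set (Sym2 V) | F ⊆ G.edgeSet ∧
    ∀ e ∈ F, ∀ f ∈ F, ¬D.Cross e f}).exists_maximal ⟨∅, by simp⟩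
  have hpartner : ∀ e ∈ G.edgeSet \ F, ∃ f ∈ F, D.Cross e f := by
    rintro e ⟨he, heF⟩
    by_contra! hcross
    refine heF (hmax (y := insert e F) ⟨insert_subset he hFG, ?_⟩ (subset_insert e F)
      (mem_insert e F))
    simp only [mem_insert_iff, forall_eq_or_imp]
    exact ⟨⟨fun h => h.1 rfl, hcross⟩, fun f hf => ⟨fun h => hcross f hf h.symm, hF f hf⟩⟩
  choose! g hgF hg using hpartner
  have hsub : (fun e => (e, g e)) '' (G.edgeSet \ F) ∪ (fun e => (g e, e)) '' (G.edgeSet \ F) ⊆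
      {p : Sym2 V × Sym2 V | D.Cross p.1 p.2} :=
    union_subset (image_subset_iff.mpr hg) (image_subset_iff.mpr fun e he => (hg e he).symm)
  have hdisj : Disjoint ((fun e => (e, g e)) '' (G.edgeSet \ F))
      ((fun e => (g e, e)) '' (G.edgeSet \ F)) := by
    refine disjoint_left.mpr ?_
    rintro _ ⟨e, he, rfl⟩ ⟨e', he', heq⟩
    obtain ⟨rfl, -⟩ := Prod.ext_iff.mp heq
    exact he.2 (hgF e' he')
  have hcard := ncard_le_ncard hsub
  rw [ncard_union_eq hdisj, ncard_image_of_injective _ fun _ _ h => (Prod.ext_iff.mp h).1,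
    ncard_image_of_injective _ fun _ _ h => (Prod.ext_iff.mp h).2,
    ncard_sdiff hFG] at hcard
  have hbound := hD.ncard_add_six_le h3 hFG hF
  unfold crNum
  omega

theorem IsGood.crossingNumber_eq [Finite V] (hD : D.IsGood) (h3 : 3 ≤ Nat.card V)
    (hE : 3 * Nat.card V + D.crNum ≤ G.edgeSet.ncard + 6) : crossingNumber G = D.crNum := by
  refine IsLeast.csInf_eq ⟨⟨D, hD, rfl⟩, ?_⟩
  rintro _ ⟨D', hD', rfl⟩
  exact Nat.le_of_add_le_add_left (hE.trans (hD'.ncard_edgeSet_add_six_le h3))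

theorem cross_iff_of_arc_eq {H : SimpleGraph V} (hGH : G ≤ H) {D' : Drawing H}
    (hpos : D'.pos = D.pos) (harc : ∀ ⦃u v⦄ (h : G.Adj u v), D'.arc (hGH h) = D.arc h)
    (he : e ∈ G.edgeSet) (hf : f ∈ G.edgeSet) : D'.Cross e f ↔ D.Cross e f := by
  have hint : ∀ e ∈ G.edgeSet, D'.edgeInt e = D.edgeInt e := by
    intro e he
    induction e with | _ u v
    have huv : G.Adj u v := he
    rw [edgeInt_mk huv, edgeInt_mk (hGH huv)]
    unfold arcInt
    rw [harc, hpos]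
  rw [Cross, Cross, hint e he, hint f hf]

/-- A new edge crosses at most one edge of `F`. After rerouting that edge, `F` and the new edge are
drawn without crossings, but they are too many. -/
theorem IsMaximalOnePlane.of_skeleton [Finite V] (hD : D.IsGood) (hone : D.IsOnePlanar)
    (h3 : 3 ≤ Nat.card V) {F : Set (Sym2 V)} (hF : F ⊆ G.edgeSet)
    (hcard : 3 * Nat.card V ≤ F.ncard + 6) (hcross : ∀ e ∈ F, ∀ f ∈ F, ¬D.Cross e f)
    (hkite : ∀ e ∈ F, (∃ f, D.Cross e f) ∨
      ∃ p q r s, e = s(p, q) ∧ D.Cross s(p, r) s(q, s)) : D.IsMaximalOnePlane := by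
  refine ⟨hD, hone, fun u v huv hnadj D' hpos harc ⟨hD', hone'⟩ => ?_⟩
  have hle : G ≤ G ⊔ SimpleGraph.fromEdgeSet {s(u, v)} := le_sup_left
  have hiff : ∀ {e f}, e ∈ G.edgeSet → f ∈ G.edgeSet → (D'.Cross e f ↔ D.Cross e f) :=
    cross_iff_of_arc_eq hle hpos harc
  have hcross' : ∀ e ∈ F, ∀ f ∈ F, ¬D'.Cross e f := fun e he f hf =>
    (hiff (hF he) (hF hf)).not.mpr (hcross e he f hf)
  have hF' : insert s(u, v) F ⊆ (G ⊔ SimpleGraph.fromEdgeSet {s(u, v)}).edgeSet :=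
    insert_subset (by simp [huv]) (hF.trans (SimpleGraph.edgeSet_mono hle))
  suffices (insert s(u, v) F).ncard + 6 ≤ 3 * Nat.card V by
    rw [ncard_insert_of_notMem fun h => hnadj (hF h)] at this
    omega
  by_cases hnew : ∃ e ∈ F, D'.Cross s(u, v) e
  · obtain ⟨e, heF, hx⟩ := hnew
    rcases hkite e heF with ⟨f, hf⟩ | ⟨p, q, r, s, rfl, hprqs⟩
    · have hf' := (hiff hf.left_mem hf.symm.left_mem).mpr hf
      have huvf : s(u, v) = f := hone' e hx.symm hf'
      exact absurd (show s(u, v) ∈ G.edgeSet from huvf ▸ hf.symm.left_mem) hnadj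
    · refine hD'.ncard_add_six_le_of_reroute hone' h3 hF'
        ((hiff hprqs.left_mem hprqs.symm.left_mem).mpr hprqs) ?_
      rintro e (rfl | he) f (rfl | hf) hepq hfpq hef
      · exact hef.1 rfl
      · exact hfpq (hone' _ hef hx)
      · exact hepq (hone' _ hef.symm hx)
      · exact hcross' e he f hf hef
  · refine hD'.ncard_add_six_le h3 hF' ?_
    rintro e (rfl | he) f (rfl | hf) hef
    · exact hef.1 rfl
    · exact hnew ⟨f, hf, hef⟩
    · exact hnew ⟨e, he, hef.symm⟩
    · exact hcross' e he f hf hef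

end Drawing

section Deletion

variable {V : Type} {G : SimpleGraph V} {S : Set V} {u v w : V}

theorem length_le_ncard_of_pairwise_disjoint {S : Set V} (hS : S.Finite) {L : List (Set V)}
    (hL : L.Pairwise Disjoint) (hmeet : ∀ B ∈ L, ¬Disjoint B S) : L.length ≤ S.ncard := by
  induction L generalizing S with
  | nil => exact Nat.zero_le _
  | cons B L ih =>
    obtain ⟨hB, hL⟩ := List.pairwise_cons.mp hL
    obtain ⟨hBS, hmeet⟩ := List.forall_mem_cons.mp hmeet
    obtain ⟨v, hvB, hvS⟩ := not_disjoint_iff.mp hBS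
    rw [List.length_cons, ← ncard_sdiff_singleton_add_one hvS hS]
    refine Nat.succ_le_succ (ih hS.sdiff hL fun B' hB' hdisj => hmeet B' hB' ?_)
    refine disjoint_left.mpr fun w hw hwS => ?_
    exact disjoint_left.mp hdisj hw ⟨hwS, fun hwv => disjoint_left.mp (hB B' hB') (hwv ▸ hvB) hw⟩

theorem exists_disjoint_of_ncard_lt_length (hS : S.Finite) {L : List (Set V)}
    (hL : L.Pairwise Disjoint) (hlt : S.ncard < L.length) : ∃ B ∈ L, Disjoint B S := by
  by_contra! h
  exact hlt.not_ge (length_le_ncard_of_pairwise_disjoint hS hL h)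

/-- `u` and `v` survive the deletion of `S` and are joined by a walk that avoids `S`. -/
def ReachableAvoiding (G : SimpleGraph V) (S : Set V) (u v : V) : Prop :=
  ∃ (hu : u ∉ S) (hv : v ∉ S), (G.induce Sᶜ).Reachable ⟨u, hu⟩ ⟨v, hv⟩

theorem ReachableAvoiding.refl (hu : u ∉ S) : ReachableAvoiding G S u u :=
  ⟨hu, hu, .refl _⟩

theorem ReachableAvoiding.symm : ReachableAvoiding G S u v → ReachableAvoiding G S v u :=
  fun ⟨hu, hv, h⟩ => ⟨hv, hu, h.symm⟩

theorem ReachableAvoiding.trans :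
    ReachableAvoiding G S u v → ReachableAvoiding G S v w → ReachableAvoiding G S u w :=
  fun ⟨hu, _, h⟩ ⟨_, hw, h'⟩ => ⟨hu, hw, h.trans h'⟩

theorem ReachableAvoiding.of_adj (h : G.Adj u v) (hu : u ∉ S) (hv : v ∉ S) :
    ReachableAvoiding G S u v :=
  ⟨hu, hv, SimpleGraph.Adj.reachable (SimpleGraph.induce_adj.mpr h)⟩

theorem connected_induce_compl_of_forall_reachableAvoiding (hu : u ∉ S)
    (h : ∀ v ∉ S, ReachableAvoiding G S v u) : (G.induce Sᶜ).Connected :=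
  (SimpleGraph.connected_iff_exists_forall_reachable _).mpr
    ⟨⟨u, hu⟩, fun v => (h v.1 v.2).symm.2.2⟩

theorem KConnected.of_iso {W : Type} {H : SimpleGraph W} (φ : G ≃g H) {k : ℕ}
    (hG : KConnected G k) : KConnected H k := by
  intro S hS
  have hpre : (φ ⁻¹' S).ncard < k := by
    rwa [ncard_preimage_of_injective_subset_range φ.injective (by simp [φ.surjective.range_eq])]
  have hbij : BijOn φ (φ ⁻¹' S)ᶜ Sᶜ := φ.toEquiv.bijOn fun _ => Iff.rfl
  exact (φ.induce hbij).connected_iff.mp (hG _ hpre)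

end Deletion

theorem reflTransGen_of_forall_ne_add_one {r : ℕ} [NeZero r] {R : ZMod r → ZMod r → Prop}
    {i₀ : ZMod r} (h : ∀ i ≠ i₀, R i (i + 1)) (i : ZMod r) :
    Relation.ReflTransGen R (i₀ + 1) i := by
  have hchain : ∀ k < r, Relation.ReflTransGen R (i₀ + 1) (i₀ + 1 + (k : ZMod r)) := by
    intro k
    induction k with
    | zero => simp [Relation.ReflTransGen.refl]
    | succ k ih =>
      intro hk
      have hne : i₀ + 1 + (k : ZMod r) ≠ i₀ := by
        rw [add_assoc, Ne, add_eq_left, ← Nat.cast_one, ← Nat.cast_add,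
          ZMod.natCast_eq_zero_iff]
        exact Nat.not_dvd_of_pos_of_lt (by omega) (by omega)
      simpa [add_assoc] using (ih (by omega)).tail (h _ hne)
  simpa using hchain (i - (i₀ + 1)).val (ZMod.val_lt _)

namespace KiteRing

/-- The vertices of the kite ring: two poles, and around the ring `r` sectors with two vertices
`a`, two vertices `b` and one vertex `x` each. The Boolean tells the two sides of the ring apart. -/
inductive Vertex (r : ℕ)
  | pole (f : Bool)
  | a (f : Bool) (i : ZMod r)
  | b (f : Bool) (i : ZMod r)
  | x (i : ZMod r)

/-- The vertices met by the edges of one sector; `next` is a vertex `a` of the next sector. -/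
inductive SectorVertex
  | pole (f : Bool)
  | a (f : Bool)
  | b (f : Bool)
  | x
  | next (f : Bool)

/-- The 18 edges of a sector, named after their ends. The edges `diag` join an `a` to a `b` on the
other side, the edges `ab` join them on the same side. -/
inductive SectorEdge
  | aa
  | bb
  | ab (f : Bool)
  | diag (f : Bool)
  | poleA (f : Bool)
  | poleB (f : Bool)
  | poleX (f : Bool)
  | xb (f : Bool)
  | xNext (f : Bool)
  | bNext (f : Bool)
  deriving DecidableEq, Fintype

/-- The first end of an edge, within its sector. -/
def SectorEdge.src : SectorEdge → SectorVertex
  | aa => .a true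
  | bb => .b true
  | ab f | diag f => .a f
  | poleA f | poleB f | poleX f => .pole f
  | xb _ | xNext _ => .x
  | bNext f => .b f

/-- The second end of an edge, within its sector. -/
def SectorEdge.tgt : SectorEdge → SectorVertex
  | aa => .a false
  | bb => .b false
  | diag f => .b !f
  | poleA f => .a f
  | ab f | poleB f | xb f => .b f
  | poleX _ => .x
  | xNext f | bNext f => .next f

variable {r : ℕ}

/-- The vertex of the kite ring at a given place of sector `i`. -/
def SectorVertex.at (i : ZMod r) : SectorVertex → Vertex r
  | pole f => .pole f
  | a f => .a f i
  | b f => .b f i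
  | x => .x i
  | next f => .a f (i + 1)

/-- The first end of the edge of type `ε.1` in sector `ε.2`. -/
def src (ε : SectorEdge × ZMod r) : Vertex r := ε.1.src.at ε.2

/-- The second end of the edge of type `ε.1` in sector `ε.2`. -/
def tgt (ε : SectorEdge × ZMod r) : Vertex r := ε.1.tgt.at ε.2

theorem src_ne_tgt (ε : SectorEdge × ZMod r) : src ε ≠ tgt ε := by
  obtain ⟨τ, i⟩ := ε
  cases τ <;> simp [src, tgt, SectorEdge.src, SectorEdge.tgt, SectorVertex.at]

theorem exists_mem_edge (v : Vertex r) : ∃ ε : SectorEdge × ZMod r, v ∈ s(src ε, tgt ε) := by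
  rcases v with f | ⟨f, i⟩ | ⟨f, i⟩ | i
  · exact ⟨(.poleA f, 0), Sym2.mem_mk_left _ _⟩
  · exact ⟨(.ab f, i), Sym2.mem_mk_left _ _⟩
  · exact ⟨(.ab f, i), Sym2.mem_mk_right _ _⟩
  · exact ⟨(.xb true, i), Sym2.mem_mk_left _ _⟩

theorem card_vertex [NeZero r] : Nat.card (Vertex r) = 5 * r + 2 := by
  let e : Vertex r ≃ Bool ⊕ (Bool × ZMod r) ⊕ (Bool × ZMod r) ⊕ ZMod r :=
    { toFun
        | .pole f => .inl f
        | .a f i => .inr (.inl (f, i))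
        | .b f i => .inr (.inr (.inl (f, i)))
        | .x i => .inr (.inr (.inr i))
      invFun
        | .inl f => .pole f
        | .inr (.inl (f, i)) => .a f i
        | .inr (.inr (.inl (f, i))) => .b f i
        | .inr (.inr (.inr i)) => .x i
      left_inv := by rintro (_ | _ | _ | _) <;> rfl
      right_inv := by rintro (_ | _ | _ | _) <;> rfl }
  rw [Nat.card_congr e]
  simp only [Nat.card_eq_fintype_card, Fintype.card_sum, Fintype.card_prod, ZMod.card,
    Fintype.card_bool]
  ring

end KiteRing

open KiteRing in
/-- The graph of the family: its edges are those of the `r` sectors. -/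
def kiteRing (r : ℕ) : SimpleGraph (Vertex r) :=
  .fromEdgeSet (range fun ε : SectorEdge × ZMod r => s(src ε, tgt ε))

namespace KiteRing

variable {r : ℕ} {f g : Bool}

theorem edgeSet_kiteRing :
    (kiteRing r).edgeSet = range fun ε : SectorEdge × ZMod r => s(src ε, tgt ε) :=
  edgeSet_fromEdgeSet_of_forall_not_isDiag <| by
    rintro _ ⟨ε, rfl⟩
    exact src_ne_tgt ε

theorem adj_src_tgt (ε : SectorEdge × ZMod r) : (kiteRing r).Adj (src ε) (tgt ε) := by
  rw [← SimpleGraph.mem_edgeSet, edgeSet_kiteRing]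
  exact mem_range_self ε

theorem adj_pole_a (f : Bool) (i : ZMod r) : (kiteRing r).Adj (.pole f) (.a f i) :=
  adj_src_tgt (.poleA f, i)

theorem adj_pole_b (f : Bool) (i : ZMod r) : (kiteRing r).Adj (.pole f) (.b f i) :=
  adj_src_tgt (.poleB f, i)

theorem adj_pole_x (f : Bool) (i : ZMod r) : (kiteRing r).Adj (.pole f) (.x i) :=
  adj_src_tgt (.poleX f, i)

theorem adj_x_b (f : Bool) (i : ZMod r) : (kiteRing r).Adj (.x i) (.b f i) :=
  adj_src_tgt (.xb f, i)

theorem adj_x_a_add_one (f : Bool) (i : ZMod r) : (kiteRing r).Adj (.x i) (.a f (i + 1)) :=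
  adj_src_tgt (.xNext f, i)

theorem adj_b_a_add_one (f : Bool) (i : ZMod r) : (kiteRing r).Adj (.b f i) (.a f (i + 1)) :=
  adj_src_tgt (.bNext f, i)

theorem adj_a_a (hfg : f ≠ g) (i : ZMod r) : (kiteRing r).Adj (.a f i) (.a g i) := by
  have h : (kiteRing r).Adj (.a true i) (.a false i) := adj_src_tgt (.aa, i)
  cases f <;> cases g <;> first | exact absurd rfl hfg | exact h | exact h.symm

theorem adj_b_b (hfg : f ≠ g) (i : ZMod r) : (kiteRing r).Adj (.b f i) (.b g i) := by
  have h : (kiteRing r).Adj (.b true i) (.b false i) := adj_src_tgt (.bb, i)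
  cases f <;> cases g <;> first | exact absurd rfl hfg | exact h | exact h.symm

theorem adj_a_b (f g : Bool) (i : ZMod r) : (kiteRing r).Adj (.a f i) (.b g i) := by
  rcases eq_or_ne g f with rfl | hgf
  · exact adj_src_tgt (.ab g, i)
  · rw [Bool.eq_not_of_ne hgf]
    exact adj_src_tgt (.diag f, i)

/-- The four vertices `a` and `b` of sector `i`, which are pairwise adjacent. -/
def clique (i : ZMod r) : Set (Vertex r) := range (Vertex.a · i) ∪ range (Vertex.b · i)

theorem isClique_clique (i : ZMod r) : (kiteRing r).IsClique (clique i) := by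
  rintro _ (⟨f, rfl⟩ | ⟨f, rfl⟩) _ (⟨g, rfl⟩ | ⟨g, rfl⟩) hne
  · exact adj_a_a (fun h => hne (congrArg (Vertex.a · i) h)) i
  · exact adj_a_b f g i
  · exact (adj_a_b g f i).symm
  · exact adj_b_b (fun h => hne (congrArg (Vertex.b · i) h)) i

theorem a_mem_clique (f : Bool) (i : ZMod r) : .a f i ∈ clique i := .inl ⟨f, rfl⟩

theorem b_mem_clique (f : Bool) (i : ZMod r) : .b f i ∈ clique i := .inr ⟨f, rfl⟩

variable {S : Set (Vertex r)}

theorem reachableAvoiding_of_mem_clique {u v : Vertex r} {i : ZMod r} (hu : u ∈ clique i)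
    (hv : v ∈ clique i) (huS : u ∉ S) (hvS : v ∉ S) :
    ReachableAvoiding (kiteRing r) S u v := by
  rcases eq_or_ne u v with rfl | huv
  · exact .refl huS
  · exact .of_adj (isClique_clique i hu hv huv) huS hvS

theorem reachableAvoiding_clique_clique_add_one {i : ZMod r}
    (hlink : .b f i ∉ S ∧ .a f (i + 1) ∉ S) {u v : Vertex r} (hu : u ∈ clique i)
    (hv : v ∈ clique (i + 1)) (huS : u ∉ S) (hvS : v ∉ S) :
    ReachableAvoiding (kiteRing r) S u v :=
  (reachableAvoiding_of_mem_clique hu (b_mem_clique f i) huS hlink.1).trans <|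
    .trans (.of_adj (adj_b_a_add_one f i) hlink.1 hlink.2)
      (reachableAvoiding_of_mem_clique (a_mem_clique f (i + 1)) hv hlink.2 hvS)

section FewDeleted

variable [NeZero r]

instance : Finite (Vertex r) :=
  Nat.finite_of_card_ne_zero (by rw [card_vertex]; omega)

variable (hS : S.ncard < 6)
include hS

/-- The routes from pole to pole through the sectors `0` and `1` are already six. -/
theorem reachableAvoiding_pole_pole (hr : 2 ≤ r) (hpole : ∀ f, .pole f ∉ S) (hfg : f ≠ g) :
    ReachableAvoiding (kiteRing r) S (.pole f) (.pole g) := by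
  have : Fact (1 < r) := ⟨hr⟩
  let routes (i : ZMod r) : List (Set (Vertex r)) := [{.a f i, .a g i}, {.b f i, .b g i}, {.x i}]
  obtain ⟨B, hB, hBS⟩ := exists_disjoint_of_ncard_lt_length (L := routes 0 ++ routes 1)
    S.toFinite (by simp [routes]) hS
  obtain ⟨i, hB⟩ : ∃ i, B ∈ routes i := (List.mem_append.mp hB).elim (⟨0, ·⟩) (⟨1, ·⟩)
  simp only [routes, List.mem_cons, List.not_mem_nil, or_false] at hB
  rcases hB with rfl | rfl | rfl <;>
    simp only [disjoint_insert_left, disjoint_singleton_left] at hBS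
  · exact (ReachableAvoiding.of_adj (adj_pole_a f i) (hpole f) hBS.1).trans
      (.trans (.of_adj (adj_a_a hfg i) hBS.1 hBS.2) (.of_adj (adj_pole_a g i).symm hBS.2 (hpole g)))
  · exact (ReachableAvoiding.of_adj (adj_pole_b f i) (hpole f) hBS.1).trans
      (.trans (.of_adj (adj_b_b hfg i) hBS.1 hBS.2) (.of_adj (adj_pole_b g i).symm hBS.2 (hpole g)))
  · exact (ReachableAvoiding.of_adj (adj_pole_x f i) (hpole f) hBS).trans
      (.of_adj (adj_pole_x g i).symm hBS (hpole g))

theorem reachableAvoiding_a_pole [Fact (1 < r)] (hfg : f ≠ g) (hf : .pole f ∈ S)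
    (hg : .pole g ∉ S) {i : ZMod r} (hv : .a f (i + 1) ∉ S) :
    ReachableAvoiding (kiteRing r) S (.a f (i + 1)) (.pole g) := by
  obtain ⟨B, hB, hBS⟩ := exists_disjoint_of_ncard_lt_length (L := [{.pole f}, {.a g (i + 1)},
    {.b g (i + 1)}, {.x i}, {.b f (i + 1), .x (i + 1)}, {.b f i, .b g i}])
    S.toFinite (by simp [hfg, hfg.symm]) hS
  simp only [List.mem_cons, List.not_mem_nil, or_false] at hB
  rcases hB with rfl | rfl | rfl | rfl | rfl | rfl <;>
    simp only [disjoint_insert_left, disjoint_singleton_left] at hBS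
  · exact absurd hf hBS
  · exact .trans (.of_adj (adj_a_a hfg _) hv hBS) (.of_adj (adj_pole_a g _).symm hBS hg)
  · exact .trans (.of_adj (adj_a_b f g _) hv hBS) (.of_adj (adj_pole_b g _).symm hBS hg)
  · exact .trans (.of_adj (adj_x_a_add_one f i).symm hv hBS)
      (.of_adj (adj_pole_x g i).symm hBS hg)
  · exact .trans (.of_adj (adj_a_b f f _) hv hBS.1)
      (.trans (.of_adj (adj_x_b f _).symm hBS.1 hBS.2) (.of_adj (adj_pole_x g _).symm hBS.2 hg))
  · exact .trans (.of_adj (adj_b_a_add_one f i).symm hv hBS.1)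
      (.trans (.of_adj (adj_b_b hfg i) hBS.1 hBS.2) (.of_adj (adj_pole_b g i).symm hBS.2 hg))

theorem reachableAvoiding_b_pole [Fact (1 < r)] (hfg : f ≠ g) (hf : .pole f ∈ S)
    (hg : .pole g ∉ S) {i : ZMod r} (hv : .b f (i + 1) ∉ S) :
    ReachableAvoiding (kiteRing r) S (.b f (i + 1)) (.pole g) := by
  obtain ⟨B, hB, hBS⟩ := exists_disjoint_of_ncard_lt_length (L := [{.pole f}, {.a g (i + 1)},
    {.b g (i + 1)}, {.x (i + 1)}, {.a f (i + 1), .x i}, {.a f (i + 1 + 1), .a g (i + 1 + 1)}])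
    S.toFinite (by simp [hfg, hfg.symm]) hS
  simp only [List.mem_cons, List.not_mem_nil, or_false] at hB
  rcases hB with rfl | rfl | rfl | rfl | rfl | rfl <;>
    simp only [disjoint_insert_left, disjoint_singleton_left] at hBS
  · exact absurd hf hBS
  · exact .trans (.of_adj (adj_a_b g f _).symm hv hBS) (.of_adj (adj_pole_a g _).symm hBS hg)
  · exact .trans (.of_adj (adj_b_b hfg _) hv hBS) (.of_adj (adj_pole_b g _).symm hBS hg)
  · exact .trans (.of_adj (adj_x_b f _).symm hv hBS) (.of_adj (adj_pole_x g _).symm hBS hg)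
  · exact .trans (.of_adj (adj_a_b f f _).symm hv hBS.1)
      (.trans (.of_adj (adj_x_a_add_one f i).symm hBS.1 hBS.2)
        (.of_adj (adj_pole_x g i).symm hBS.2 hg))
  · exact .trans (.of_adj (adj_b_a_add_one f _) hv hBS.1)
      (.trans (.of_adj (adj_a_a hfg _) hBS.1 hBS.2) (.of_adj (adj_pole_a g _).symm hBS.2 hg))

theorem exists_a_or_b_notMem (hpole : ∀ f, .pole f ∈ S) (i j : ZMod r) :
    ∃ f, .a f i ∉ S ∨ .b f j ∉ S := by
  obtain ⟨B, hB, hBS⟩ := exists_disjoint_of_ncard_lt_length (L := [{.pole true}, {.pole false},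
    {.a true i}, {.a false i}, {.b true j}, {.b false j}]) S.toFinite (by simp) hS
  simp only [List.mem_cons, List.not_mem_nil, or_false] at hB
  rcases hB with rfl | rfl | rfl | rfl | rfl | rfl <;> rw [disjoint_singleton_left] at hBS
  · exact absurd (hpole _) hBS
  · exact absurd (hpole _) hBS
  · exact ⟨_, .inl hBS⟩
  · exact ⟨_, .inl hBS⟩
  · exact ⟨_, .inr hBS⟩
  · exact ⟨_, .inr hBS⟩

theorem exists_b_notMem_a_add_one_notMem (hpole : ∀ f, .pole f ∈ S) {i j : ZMod r} (hij : i ≠ j) :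
    ∃ f, (.b f i ∉ S ∧ .a f (i + 1) ∉ S) ∨ (.b f j ∉ S ∧ .a f (j + 1) ∉ S) := by
  obtain ⟨B, hB, hBS⟩ := exists_disjoint_of_ncard_lt_length (L := [{.pole true}, {.pole false},
    {.b true i, .a true (i + 1)}, {.b false i, .a false (i + 1)},
    {.b true j, .a true (j + 1)}, {.b false j, .a false (j + 1)}])
    S.toFinite (by simp [hij]) hS
  simp only [List.mem_cons, List.not_mem_nil, or_false] at hB
  rcases hB with rfl | rfl | rfl | rfl | rfl | rfl <;>
    simp only [disjoint_insert_left, disjoint_singleton_left] at hBS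
  · exact absurd (hpole _) hBS
  · exact absurd (hpole _) hBS
  · exact ⟨_, .inl hBS⟩
  · exact ⟨_, .inl hBS⟩
  · exact ⟨_, .inr hBS⟩
  · exact ⟨_, .inr hBS⟩

theorem connected_induce_compl_of_poles_notMem (hr : 2 ≤ r) (hpole : ∀ f, .pole f ∉ S) :
    ((kiteRing r).induce Sᶜ).Connected := by
  have htop (f) : ReachableAvoiding (kiteRing r) S (.pole f) (.pole true) := by
    rcases eq_or_ne f true with rfl | hf
    · exact .refl (hpole true)
    · exact reachableAvoiding_pole_pole hS hr hpole hf
  refine connected_induce_compl_of_forall_reachableAvoiding (hpole true) fun v hv => ?_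
  rcases v with f | ⟨f, i⟩ | ⟨f, i⟩ | i
  · exact htop f
  · exact .trans (.of_adj (adj_pole_a f i).symm hv (hpole f)) (htop f)
  · exact .trans (.of_adj (adj_pole_b f i).symm hv (hpole f)) (htop f)
  · exact .of_adj (adj_pole_x true i).symm hv (hpole true)

theorem connected_induce_compl_of_pole_mem_of_pole_notMem [Fact (1 < r)] (hfg : f ≠ g)
    (hf : .pole f ∈ S) (hg : .pole g ∉ S) : ((kiteRing r).induce Sᶜ).Connected := by
  have side (f') : f' = f ∨ f' = g := by cases f <;> cases g <;> cases f' <;> simp_all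
  refine connected_induce_compl_of_forall_reachableAvoiding hg fun v hv => ?_
  rcases v with f' | ⟨f', i⟩ | ⟨f', i⟩ | i
  · rcases side f' with rfl | rfl
    exacts [absurd hf hv, .refl hg]
  · rcases side f' with rfl | rfl
    · rw [← sub_add_cancel i 1] at hv ⊢
      exact reachableAvoiding_a_pole hS hfg hf hg hv
    · exact .of_adj (adj_pole_a f' i).symm hv hg
  · rcases side f' with rfl | rfl
    · rw [← sub_add_cancel i 1] at hv ⊢
      exact reachableAvoiding_b_pole hS hfg hf hg hv
    · exact .of_adj (adj_pole_b f' i).symm hv hg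
  · exact .of_adj (adj_pole_x g i).symm hv hg

theorem exists_mem_clique_notMem (hpole : ∀ f, .pole f ∈ S) (i : ZMod r) :
    ∃ v ∈ clique i, v ∉ S := by
  obtain ⟨f, ha | hb⟩ := exists_a_or_b_notMem hS hpole i i
  exacts [⟨_, a_mem_clique f i, ha⟩, ⟨_, b_mem_clique f i, hb⟩]

/-- At most one of the links `b f i`, `a f (i + 1)` between consecutive cliques is destroyed, so
the cliques still form a path. -/
theorem exists_forall_reachableAvoiding_clique (hpole : ∀ f, .pole f ∈ S) :
    ∃ u ∉ S, ∀ i, ∀ v ∈ clique i, v ∉ S → ReachableAvoiding (kiteRing r) S u v := by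
  obtain ⟨i₀, hi₀⟩ : ∃ i₀ : ZMod r, ∀ i ≠ i₀, ∃ f, .b f i ∉ S ∧ .a f (i + 1) ∉ S := by
    by_contra! h
    obtain ⟨i, -, hi⟩ := h 0
    obtain ⟨j, hij, hj⟩ := h i
    obtain ⟨f, hlink | hlink⟩ := exists_b_notMem_a_add_one_notMem hS hpole hij
    exacts [hlink.2 (hj f hlink.1), hlink.2 (hi f hlink.1)]
  obtain ⟨u, hu, huS⟩ := exists_mem_clique_notMem hS hpole (i₀ + 1)
  refine ⟨u, huS, fun i => ?_⟩
  have hpath := reflTransGen_of_forall_ne_add_one (i₀ := i₀)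
    (R := fun i j => j = i + 1 ∧ ∃ f, .b f i ∉ S ∧ .a f (i + 1) ∉ S)
    (fun i hi => ⟨rfl, hi₀ i hi⟩) i
  induction hpath with
  | refl => exact fun v hv hvS => reachableAvoiding_of_mem_clique hu hv huS hvS
  | @tail i j _ hij ih =>
    obtain ⟨rfl, f, hlink⟩ := hij
    intro v hv hvS
    obtain ⟨w, hw, hwS⟩ := exists_mem_clique_notMem hS hpole i
    exact (ih w hw hwS).trans (reachableAvoiding_clique_clique_add_one hlink hw hv hwS hvS)

theorem connected_induce_compl_of_poles_mem (hpole : ∀ f, .pole f ∈ S) :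
    ((kiteRing r).induce Sᶜ).Connected := by
  obtain ⟨u, hu, hreach⟩ := exists_forall_reachableAvoiding_clique hS hpole
  refine connected_induce_compl_of_forall_reachableAvoiding hu fun v hv => ?_
  rcases v with f | ⟨f, i⟩ | ⟨f, i⟩ | i
  · exact absurd (hpole f) hv
  · exact (hreach i _ (a_mem_clique f i) hv).symm
  · exact (hreach i _ (b_mem_clique f i) hv).symm
  · obtain ⟨f, ha | hb⟩ := exists_a_or_b_notMem hS hpole (i + 1) i
    · exact .trans (.of_adj (adj_x_a_add_one f i) hv ha)
        (hreach (i + 1) _ (a_mem_clique f (i + 1)) ha).symm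
    · exact .trans (.of_adj (adj_x_b f i) hv hb) (hreach i _ (b_mem_clique f i) hb).symm

end FewDeleted

theorem kConnected_kiteRing (hr : 2 ≤ r) : KConnected (kiteRing r) 6 := by
  intro S hS
  have : NeZero r := ⟨by omega⟩
  have : Fact (1 < r) := ⟨hr⟩
  by_cases hf : Vertex.pole false ∈ S <;> by_cases ht : Vertex.pole true ∈ S
  · exact connected_induce_compl_of_poles_mem hS (Bool.rec hf ht)
  · exact connected_induce_compl_of_pole_mem_of_pole_notMem hS Bool.false_ne_true hf ht
  · exact connected_induce_compl_of_pole_mem_of_pole_notMem hS Bool.false_ne_true.symm ht hf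
  · exact connected_induce_compl_of_poles_notMem hS hr (Bool.rec hf ht)

end KiteRing

section Segments

variable {a b c d p q r x y : ℝ × ℝ}

/-- Twice the signed area of the triangle `p q r`; its sign tells on which side of the line `p q`
the point `r` lies. -/
def orient (p q r : ℝ × ℝ) : ℝ :=
  (q.1 - p.1) * (r.2 - p.2) - (q.2 - p.2) * (r.1 - p.1)

theorem orient_swap (p q r : ℝ × ℝ) : orient p r q = -orient p q r := by
  unfold orient
  ring

@[simp]
theorem orient_self_left (p q : ℝ × ℝ) : orient p q p = 0 := by
  unfold orient
  ring

@[simp]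
theorem orient_self_right (p q : ℝ × ℝ) : orient p q q = 0 := by
  unfold orient
  ring

theorem orient_lineMap (p q c d : ℝ × ℝ) (t : ℝ) :
    orient p q (AffineMap.lineMap c d t) = (1 - t) * orient p q c + t * orient p q d := by
  simp only [orient, AffineMap.lineMap_apply, vsub_eq_sub, vadd_eq_add, Prod.fst_add, Prod.snd_add,
    Prod.smul_fst, Prod.smul_snd, Prod.fst_sub, Prod.snd_sub, smul_eq_mul]
  ring

theorem orient_eq_zero_of_mem_segment (h : x ∈ segment ℝ p q) : orient p q x = 0 := by
  rw [segment_eq_image_lineMap] at h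
  obtain ⟨t, -, rfl⟩ := h
  simp [orient_lineMap]

theorem mul_orient_nonpos_of_mem_segment (hab : x ∈ segment ℝ a b) (hcd : x ∈ segment ℝ c d) :
    orient a b c * orient a b d ≤ 0 := by
  have hx := orient_eq_zero_of_mem_segment hab
  rw [segment_eq_image_lineMap] at hcd
  obtain ⟨t, ⟨ht₀, ht₁⟩, rfl⟩ := hcd
  rw [orient_lineMap] at hx
  have hmul : orient a b c * orient a b d =
      -((1 - t) * orient a b c ^ 2 + t * orient a b d ^ 2) := by
    linear_combination (orient a b c + orient a b d) * hx
  have := sub_nonneg.mpr ht₁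
  rw [hmul, neg_nonpos]
  positivity

theorem eq_of_mem_segment_of_mem_segment (h : orient p q r ≠ 0) (hq : x ∈ segment ℝ p q)
    (hr : x ∈ segment ℝ p r) : x = p := by
  have hx := orient_eq_zero_of_mem_segment hq
  rw [segment_eq_image_lineMap] at hr
  obtain ⟨t, -, rfl⟩ := hr
  obtain rfl : t = 0 := by simpa [orient_lineMap, h] using hx
  exact AffineMap.lineMap_apply_zero p r

/-- The segments `ab` and `cd` cross properly: each of them has its ends strictly on different
sides of the other. -/
def SegmentsCross (a b c d : ℝ × ℝ) : Prop :=
  orient a b c * orient a b d < 0 ∧ orient c d a * orient c d b < 0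

theorem SegmentsCross.symm (h : SegmentsCross a b c d) : SegmentsCross c d a b :=
  And.symm h

theorem SegmentsCross.left_notMem (h : SegmentsCross a b c d) : a ∉ segment ℝ c d := fun ha => by
  simpa [orient_eq_zero_of_mem_segment ha] using h.2

theorem SegmentsCross.right_notMem (h : SegmentsCross a b c d) : b ∉ segment ℝ c d := fun hb => by
  simpa [orient_eq_zero_of_mem_segment hb] using h.2

theorem SegmentsCross.eq_of_mem (h : SegmentsCross a b c d) (hx : x ∈ segment ℝ a b)
    (hx' : x ∈ segment ℝ c d) (hy : y ∈ segment ℝ a b) (hy' : y ∈ segment ℝ c d) : x = y := by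
  have hx := orient_eq_zero_of_mem_segment hx
  have hy := orient_eq_zero_of_mem_segment hy
  rw [segment_eq_image_lineMap] at hx' hy'
  obtain ⟨t, -, rfl⟩ := hx'
  obtain ⟨s, -, rfl⟩ := hy'
  rw [orient_lineMap] at hx hy
  have hne : orient a b d - orient a b c ≠ 0 := fun heq => by
    have := h.1
    rw [sub_eq_zero.mp heq] at this
    exact (mul_self_nonneg _).not_gt this
  have hst : (t - s) * (orient a b d - orient a b c) = 0 := by linear_combination hx - hy
  rw [sub_eq_zero.mp ((mul_eq_zero.mp hst).resolve_right hne)]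

theorem div_sub_mem_Icc {u v : ℝ} (h : u * v < 0) : u / (u - v) ∈ Icc 0 1 := by
  rcases mul_neg_iff.mp h with ⟨hu, hv⟩ | ⟨hu, hv⟩
  · exact ⟨div_nonneg hu.le (by linarith), (div_le_one (by linarith)).mpr (by linarith)⟩
  · exact ⟨div_nonneg_of_nonpos hu.le (by linarith),
      (div_le_one_of_neg (by linarith)).mpr (by linarith)⟩

theorem SegmentsCross.exists_mem (h : SegmentsCross a b c d) :
    ∃ x, x ∈ segment ℝ a b ∧ x ∈ segment ℝ c d := by
  have hne : orient c d a - orient c d b ≠ 0 := fun heq => by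
    have := h.2
    rw [sub_eq_zero.mp heq] at this
    exact (mul_self_nonneg _).not_gt this
  have hneg : orient a b c - orient a b d = -(orient c d a - orient c d b) := by
    unfold orient
    ring
  have hmeet : AffineMap.lineMap a b (orient c d a / (orient c d a - orient c d b)) =
      AffineMap.lineMap c d (orient a b c / (orient a b c - orient a b d)) := by
    rw [hneg]
    ext <;> simp only [AffineMap.lineMap_apply, vsub_eq_sub, vadd_eq_add, Prod.fst_add,
      Prod.snd_add, Prod.smul_fst, Prod.smul_snd, Prod.fst_sub, Prod.snd_sub, smul_eq_mul]
    all_goals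
      field_simp
      unfold orient
      ring
  rw [segment_eq_image_lineMap, segment_eq_image_lineMap]
  exact ⟨_, ⟨_, div_sub_mem_Icc h.2, rfl⟩, ⟨_, div_sub_mem_Icc h.1, hmeet.symm⟩⟩

/-- A sufficient condition for the segments `ab` and `cd` to meet in no point besides a common end:
they share an end and are not collinear, or one of them lies strictly on one side of the other. -/
def SegmentsSeparated (a b c d : ℝ × ℝ) : Prop :=
  (a = c ∧ orient a b d ≠ 0) ∨ (a = d ∧ orient a b c ≠ 0) ∨
    (b = c ∧ orient b a d ≠ 0) ∨ (b = d ∧ orient b a c ≠ 0) ∨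
    0 < orient a b c * orient a b d ∨ 0 < orient c d a * orient c d b

theorem SegmentsSeparated.symm (h : SegmentsSeparated a b c d) : SegmentsSeparated c d a b := by
  rcases h with ⟨rfl, h⟩ | ⟨rfl, h⟩ | ⟨rfl, h⟩ | ⟨rfl, h⟩ | h | h
  · exact .inl ⟨rfl, by rwa [orient_swap, neg_ne_zero]⟩
  · exact .inr (.inr (.inl ⟨rfl, by rwa [orient_swap, neg_ne_zero]⟩))
  · exact .inr (.inl ⟨rfl, by rwa [orient_swap, neg_ne_zero]⟩)
  · exact .inr (.inr (.inr (.inl ⟨rfl, by rwa [orient_swap, neg_ne_zero]⟩)))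
  · exact .inr (.inr (.inr (.inr (.inr h))))
  · exact .inr (.inr (.inr (.inr (.inl h))))

theorem SegmentsSeparated.left_eq_or_right_eq (h : SegmentsSeparated a b c d)
    (hab : x ∈ segment ℝ a b) (hcd : x ∈ segment ℝ c d) : x = a ∨ x = b := by
  rcases h with ⟨rfl, h⟩ | ⟨rfl, h⟩ | ⟨rfl, h⟩ | ⟨rfl, h⟩ | h | h
  · exact .inl (eq_of_mem_segment_of_mem_segment h hab hcd)
  · exact .inl (eq_of_mem_segment_of_mem_segment h hab (segment_symm ℝ c a ▸ hcd))
  · exact .inr (eq_of_mem_segment_of_mem_segment h (segment_symm ℝ a b ▸ hab) hcd)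
  · exact .inr (eq_of_mem_segment_of_mem_segment h (segment_symm ℝ a b ▸ hab)
      (segment_symm ℝ c b ▸ hcd))
  · exact absurd h (mul_orient_nonpos_of_mem_segment hab hcd).not_gt
  · exact absurd h (mul_orient_nonpos_of_mem_segment hcd hab).not_gt

theorem SegmentsSeparated.ne (h : SegmentsSeparated a b c d) : s(a, b) ≠ s(c, d) := by
  intro heq
  rcases Sym2.eq_iff.mp heq with ⟨rfl, rfl⟩ | ⟨rfl, rfl⟩ <;>
    simp [SegmentsSeparated] at h

end Segments

namespace Drawing

variable {V : Type}

/-- The drawing of `G` by straight segments between given positions of the vertices. -/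
def straightLine (G : SimpleGraph V) (pos : V → ℝ × ℝ) (hpos : Function.Injective pos) :
    Drawing G where
  pos := pos
  pos_inj := hpos
  arc u v _ := segment ℝ (pos u) (pos v)
  arc_symm _ _ _ := segment_symm ℝ _ _
  arc_isArc u v h := ⟨AffineMap.lineMap (pos u) (pos v),
    AffineMap.lineMap_continuous.continuousOn,
    (AffineMap.lineMap_injective ℝ (hpos.ne h.ne)).injOn, AffineMap.lineMap_apply_zero _ _,
    AffineMap.lineMap_apply_one _ _, segment_eq_image_lineMap ℝ _ _⟩

variable {G : SimpleGraph V} {pos : V → ℝ × ℝ} {hpos : Function.Injective pos}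

theorem mem_edgeInt_straightLine {u v : V} (h : G.Adj u v) {x : ℝ × ℝ} :
    x ∈ (straightLine G pos hpos).edgeInt s(u, v) ↔
      x ∈ segment ℝ (pos u) (pos v) ∧ x ≠ pos u ∧ x ≠ pos v := by
  rw [edgeInt_mk h]
  simp [arcInt, straightLine]

end Drawing

/-- A description of a straight-line drawing of `G` in which each edge is crossed at most once: the
edges are indexed by `ι`, and `partner ε` is the edge crossed by the edge `ε`, if there is one. -/
structure SegmentCertificate {V ι : Type} (G : SimpleGraph V) (pos : V → ℝ × ℝ)
    (src tgt : ι → V) (partner : ι → Option ι) : Prop where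
  pos_injective : Function.Injective pos
  edgeSet_eq : G.edgeSet = range fun ε => s(src ε, tgt ε)
  exists_mem_edge : ∀ v, ∃ ε, v ∈ s(src ε, tgt ε)
  segmentsCross : ∀ ε δ, partner ε = some δ →
    SegmentsCross (pos (src ε)) (pos (tgt ε)) (pos (src δ)) (pos (tgt δ))
  segmentsSeparated : ∀ ε δ, ε ≠ δ → partner ε ≠ some δ →
    SegmentsSeparated (pos (src ε)) (pos (tgt ε)) (pos (src δ)) (pos (tgt δ))

namespace SegmentCertificate

variable {V U ι : Type} {G : SimpleGraph V} {pos : V → ℝ × ℝ} {src tgt : ι → V}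
  {partner : ι → Option ι} (C : SegmentCertificate G pos src tgt partner)
include C

/-- The drawing described by the certificate. -/
def drawing : Drawing G := .straightLine G pos C.pos_injective

theorem adj (ε : ι) : G.Adj (src ε) (tgt ε) := by
  rw [← SimpleGraph.mem_edgeSet, C.edgeSet_eq]
  exact mem_range_self ε

theorem exists_edge_eq {e : Sym2 V} (he : e ∈ G.edgeSet) : ∃ ε, s(src ε, tgt ε) = e := by
  rwa [C.edgeSet_eq] at he

theorem edge_injective : Function.Injective fun ε => s(src ε, tgt ε) := by
  intro ε δ h
  by_contra hne
  have hpos : s(pos (src ε), pos (tgt ε)) = s(pos (src δ), pos (tgt δ)) :=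
    congrArg (Sym2.map pos) h
  by_cases hX : partner ε = some δ
  · have hmem := (C.segmentsCross ε δ hX).left_notMem
    rcases Sym2.eq_iff.mp hpos with ⟨h, -⟩ | ⟨h, -⟩ <;> rw [h] at hmem
    exacts [hmem (left_mem_segment ℝ _ _), hmem (right_mem_segment ℝ _ _)]
  · exact (C.segmentsSeparated ε δ hne hX).ne hpos

theorem mem_edgeInt {ε : ι} {x : ℝ × ℝ} :
    x ∈ C.drawing.edgeInt s(src ε, tgt ε) ↔
      x ∈ segment ℝ (pos (src ε)) (pos (tgt ε)) ∧ x ≠ pos (src ε) ∧ x ≠ pos (tgt ε) :=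
  Drawing.mem_edgeInt_straightLine (C.adj ε)

theorem cross_iff {ε δ : ι} :
    C.drawing.Cross s(src ε, tgt ε) s(src δ, tgt δ) ↔ partner ε = some δ := by
  constructor
  · rintro ⟨hne, x, hx, hx'⟩
    rw [mem_edgeInt] at hx hx'
    by_contra hX
    rcases (C.segmentsSeparated ε δ (fun h => hne (by rw [h])) hX).left_eq_or_right_eq hx.1 hx'.1
      with h | h
    exacts [hx.2.1 h, hx.2.2 h]
  · intro hX
    have hcross := C.segmentsCross ε δ hX
    obtain ⟨x, hx, hx'⟩ := hcross.exists_mem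
    refine ⟨?_, x, C.mem_edgeInt.mpr ⟨hx, ?_, ?_⟩, C.mem_edgeInt.mpr ⟨hx', ?_, ?_⟩⟩
    · intro h
      obtain rfl := C.edge_injective h
      exact hcross.left_notMem (left_mem_segment ℝ _ _)
    · exact fun h => hcross.left_notMem (h ▸ hx')
    · exact fun h => hcross.right_notMem (h ▸ hx')
    · exact fun h => hcross.symm.left_notMem (h ▸ hx)
    · exact fun h => hcross.symm.right_notMem (h ▸ hx)

theorem exists_of_cross {e f : Sym2 V} (h : C.drawing.Cross e f) :
    ∃ ε δ, s(src ε, tgt ε) = e ∧ s(src δ, tgt δ) = f ∧ partner ε = some δ := by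
  obtain ⟨ε, rfl⟩ := C.exists_edge_eq h.left_mem
  obtain ⟨δ, rfl⟩ := C.exists_edge_eq h.symm.left_mem
  exact ⟨ε, δ, rfl, rfl, C.cross_iff.mp h⟩

theorem isOnePlanar_drawing : C.drawing.IsOnePlanar := by
  intro e f hf g hg
  obtain ⟨ε, δ, rfl, rfl, hδ⟩ := C.exists_of_cross hf
  obtain ⟨ε', δ', h, rfl, hδ'⟩ := C.exists_of_cross hg
  obtain rfl := C.edge_injective h
  obtain rfl := Option.some.inj (hδ.symm.trans hδ')
  rfl

theorem mem_edge_of_pos_mem_segment {v : V} {ε : ι}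
    (h : pos v ∈ segment ℝ (pos (src ε)) (pos (tgt ε))) : v ∈ s(src ε, tgt ε) := by
  obtain ⟨δ, hδ⟩ := C.exists_mem_edge v
  rcases eq_or_ne ε δ with rfl | hne
  · exact hδ
  by_cases hX : partner ε = some δ
  · have hcross := (C.segmentsCross ε δ hX).symm
    rcases Sym2.mem_iff.mp hδ with rfl | rfl
    exacts [absurd h hcross.left_notMem, absurd h hcross.right_notMem]
  · have h' : pos v ∈ segment ℝ (pos (src δ)) (pos (tgt δ)) := by
      rcases Sym2.mem_iff.mp hδ with rfl | rfl
      exacts [left_mem_segment ℝ _ _, right_mem_segment ℝ _ _]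
    exact Sym2.mem_iff.mpr (((C.segmentsSeparated ε δ hne hX).left_eq_or_right_eq h h').imp
      (C.pos_injective ·) (C.pos_injective ·))

theorem isGood_drawing : C.drawing.IsGood := by
  refine ⟨fun w u v h hw => ?_, fun e f hne x hx y hy => ?_, fun u v w h₁ h₂ hvw => ?_⟩
  · obtain ⟨ε, hε⟩ := C.exists_edge_eq (G.mem_edgeSet.mpr h)
    rw [← Sym2.mem_iff, ← hε]
    refine C.mem_edge_of_pos_mem_segment ?_
    rcases Sym2.eq_iff.mp hε with ⟨rfl, rfl⟩ | ⟨rfl, rfl⟩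
    exacts [hw, segment_symm ℝ (pos (src ε)) _ ▸ hw]
  · obtain ⟨ε, δ, rfl, rfl, hX⟩ := C.exists_of_cross ⟨hne, x, hx⟩
    have hx := And.intro (C.mem_edgeInt.mp hx.1) (C.mem_edgeInt.mp hx.2)
    have hy := And.intro (C.mem_edgeInt.mp hy.1) (C.mem_edgeInt.mp hy.2)
    exact (C.segmentsCross ε δ hX).eq_of_mem hx.1.1 hx.2.1 hy.1.1 hy.2.1
  · rw [← Drawing.edgeInt_mk, ← Drawing.edgeInt_mk, ← not_nonempty_iff_eq_empty]
    intro hmeet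
    obtain ⟨ε, δ, hε, hδ, hX⟩ := C.exists_of_cross ⟨fun h => hvw (Sym2.congr_right.mp h), hmeet⟩
    have hcross := C.segmentsCross ε δ hX
    have hu : pos u ∈ segment ℝ (pos (src δ)) (pos (tgt δ)) := by
      rcases Sym2.eq_iff.mp hδ with ⟨rfl, -⟩ | ⟨-, rfl⟩
      exacts [left_mem_segment ℝ _ _, right_mem_segment ℝ _ _]
    rcases Sym2.eq_iff.mp hε with ⟨rfl, -⟩ | ⟨-, rfl⟩
    exacts [hcross.left_notMem hu, hcross.right_notMem hu]

theorem map (φ : V ≃ U) :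
    SegmentCertificate (G.map φ.toEmbedding) (pos ∘ φ.symm) (φ ∘ src) (φ ∘ tgt) partner where
  pos_injective := C.pos_injective.comp φ.symm.injective
  edgeSet_eq := by
    rw [SimpleGraph.edgeSet_map, C.edgeSet_eq, ← range_comp]
    rfl
  exists_mem_edge v := (C.exists_mem_edge (φ.symm v)).imp fun ε h => by
    simpa [Equiv.symm_apply_eq] using h
  segmentsCross := by simpa using C.segmentsCross
  segmentsSeparated := by simpa using C.segmentsSeparated

end SegmentCertificate

section Symbolic

/-- An integral linear form in three variables, given by its coefficients. -/
abbrev LinearForm := ℤ × ℤ × ℤ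

namespace LinearForm

/-- The value of a linear form at a point with coordinates in any ring. -/
def eval {R : Type} [CommRing R] (l : LinearForm) (v : R × R × R) : R :=
  l.1 * v.1 + l.2.1 * v.2.1 + l.2.2 * v.2.2

variable {l m : LinearForm} {v : ℝ × ℝ × ℝ}

theorem eval_neg : (-l).eval v = -l.eval v := by
  simp only [eval, Prod.fst_neg, Prod.snd_neg, Int.cast_neg]
  ring

theorem eval_sub : (l - m).eval v = l.eval v - m.eval v := by
  simp only [eval, Prod.fst_sub, Prod.snd_sub, Int.cast_sub]
  ring

theorem eval_smul (n : ℤ) : (n • l).eval v = n * l.eval v := by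
  simp only [eval, Prod.smul_fst, Prod.smul_snd, smul_eq_mul, Int.cast_mul]
  ring

end LinearForm

/-- A cone in `ℝ³`, given by three integral vectors. Its points are the combinations of these with
nonnegative coefficients in which the coefficient of `axis` is positive. -/
structure Cone where
  left : ℤ × ℤ × ℤ
  right : ℤ × ℤ × ℤ
  axis : ℤ × ℤ × ℤ

namespace Cone

/-- The points of a cone. -/
def points (K : Cone) : Set (ℝ × ℝ × ℝ) :=
  {v | ∃ a b c : ℝ, 0 ≤ a ∧ 0 ≤ b ∧ 0 < c ∧
    v = (a * K.left.1 + b * K.right.1 + c * K.axis.1,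
      a * K.left.2.1 + b * K.right.2.1 + c * K.axis.2.1,
      a * K.left.2.2 + b * K.right.2.2 + c * K.axis.2.2)}

/-- A decidable criterion for `l` to vanish on `K`. -/
def Vanishes (K : Cone) (l : LinearForm) : Prop :=
  l.eval K.left = 0 ∧ l.eval K.right = 0 ∧ l.eval K.axis = 0

/-- A decidable criterion for `l` to be positive on `K`. -/
def Positive (K : Cone) (l : LinearForm) : Prop :=
  0 ≤ l.eval K.left ∧ 0 ≤ l.eval K.right ∧ 0 < l.eval K.axis

/-- A decidable criterion for `l` and `m` to have one and the same nonzero sign on `K`. -/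
def SameSign (K : Cone) (l m : LinearForm) : Prop :=
  K.Positive l ∧ K.Positive m ∨ K.Positive (-l) ∧ K.Positive (-m)

instance (K : Cone) (l : LinearForm) : Decidable (K.Vanishes l) :=
  inferInstanceAs (Decidable (_ ∧ _))

instance (K : Cone) (l : LinearForm) : Decidable (K.Positive l) :=
  inferInstanceAs (Decidable (_ ∧ _))

instance (K : Cone) (l m : LinearForm) : Decidable (K.SameSign l m) :=
  inferInstanceAs (Decidable (_ ∨ _))

variable {K : Cone} {l m : LinearForm} {v : ℝ × ℝ × ℝ}

theorem exists_eval_eq (hv : v ∈ K.points) : ∃ a b c : ℝ, 0 ≤ a ∧ 0 ≤ b ∧ 0 < c ∧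
    ∀ l : LinearForm, l.eval v =
      a * (l.eval K.left : ℤ) + b * (l.eval K.right : ℤ) + c * (l.eval K.axis : ℤ) := by
  obtain ⟨a, b, c, ha, hb, hc, rfl⟩ := hv
  refine ⟨a, b, c, ha, hb, hc, fun l => ?_⟩
  simp only [LinearForm.eval, Int.cast_add, Int.cast_mul, Int.cast_id]
  ring

theorem Vanishes.eval_eq_zero (h : K.Vanishes l) (hv : v ∈ K.points) : l.eval v = 0 := by
  obtain ⟨a, b, c, -, -, -, heval⟩ := exists_eval_eq hv
  simp [heval, h.1, h.2.1, h.2.2]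

theorem Positive.eval_pos (h : K.Positive l) (hv : v ∈ K.points) : 0 < l.eval v := by
  obtain ⟨a, b, c, ha, hb, hc, heval⟩ := exists_eval_eq hv
  have hleft : (0 : ℝ) ≤ (l.eval K.left : ℤ) := Int.cast_nonneg h.1
  have hright : (0 : ℝ) ≤ (l.eval K.right : ℤ) := Int.cast_nonneg h.2.1
  have haxis : (0 : ℝ) < (l.eval K.axis : ℤ) := Int.cast_pos.mpr h.2.2
  rw [heval]
  positivity

theorem SameSign.mul_eval_pos (h : K.SameSign l m) (hv : v ∈ K.points) :
    0 < l.eval v * m.eval v := by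
  rcases h with ⟨hl, hm⟩ | ⟨hl, hm⟩
  · exact mul_pos (hl.eval_pos hv) (hm.eval_pos hv)
  · rw [← neg_mul_neg, ← LinearForm.eval_neg, ← LinearForm.eval_neg]
    exact mul_pos (hl.eval_pos hv) (hm.eval_pos hv)

end Cone

/-- A point of the plane that depends on parameters: its first coordinate is a linear form, its
second one is constant. -/
structure SymbolicPoint where
  fst : LinearForm
  snd : ℤ

namespace SymbolicPoint

/-- The point for given values of the parameters. -/
def eval (P : SymbolicPoint) (v : ℝ × ℝ × ℝ) : ℝ × ℝ := (P.fst.eval v, P.snd)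

/-- The linear form whose values are those of `orient` at the points `P`, `Q`, `R`. -/
def orientForm (P Q R : SymbolicPoint) : LinearForm :=
  (R.snd - P.snd) • (Q.fst - P.fst) - (Q.snd - P.snd) • (R.fst - P.fst)

/-- A decidable criterion for the segments `AB` and `CD` to cross whenever the parameters
lie in `K`. -/
def Cross (K : Cone) (A B C D : SymbolicPoint) : Prop :=
  K.SameSign (orientForm A B C) (-orientForm A B D) ∧
    K.SameSign (orientForm C D A) (-orientForm C D B)

/-- A decidable criterion for the segments `AB` and `CD` to meet only in `A = C` whenever the
parameters lie in `K`. -/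
def ShareEnd (K : Cone) (A B C D : SymbolicPoint) : Prop :=
  A.snd = C.snd ∧ K.Vanishes (A.fst - C.fst) ∧
    K.SameSign (orientForm A B D) (orientForm A B D)

/-- A decidable criterion for the segments `AB` and `CD` to be separated whenever the parameters
lie in `K`. -/
def Separated (K : Cone) (A B C D : SymbolicPoint) : Prop :=
  ShareEnd K A B C D ∨ ShareEnd K A B D C ∨ ShareEnd K B A C D ∨ ShareEnd K B A D C ∨
    K.SameSign (orientForm A B C) (orientForm A B D) ∨
    K.SameSign (orientForm C D A) (orientForm C D B)

instance (K : Cone) (A B C D : SymbolicPoint) : Decidable (Cross K A B C D) :=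
  inferInstanceAs (Decidable (_ ∧ _))

instance (K : Cone) (A B C D : SymbolicPoint) : Decidable (ShareEnd K A B C D) :=
  inferInstanceAs (Decidable (_ ∧ _))

instance (K : Cone) (A B C D : SymbolicPoint) : Decidable (Separated K A B C D) :=
  inferInstanceAs (Decidable (_ ∨ _))

variable {K : Cone} {A B C D : SymbolicPoint} {v : ℝ × ℝ × ℝ}

theorem eval_orientForm : (orientForm A B C).eval v = orient (A.eval v) (B.eval v) (C.eval v) := by
  simp only [orientForm, LinearForm.eval_sub, LinearForm.eval_smul, Int.cast_sub, orient, eval]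
  ring

theorem Cross.segmentsCross (h : Cross K A B C D) (hv : v ∈ K.points) :
    SegmentsCross (A.eval v) (B.eval v) (C.eval v) (D.eval v) := by
  simpa only [SegmentsCross, ← eval_orientForm, LinearForm.eval_neg, mul_neg, neg_pos] using
    And.intro (h.1.mul_eval_pos hv) (h.2.mul_eval_pos hv)

theorem ShareEnd.eval_eq_and_orient_ne_zero (h : ShareEnd K A B C D) (hv : v ∈ K.points) :
    A.eval v = C.eval v ∧ orient (A.eval v) (B.eval v) (D.eval v) ≠ 0 := by
  obtain ⟨hsnd, hfst, horient⟩ := h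
  refine ⟨Prod.ext ?_ (congrArg Int.cast hsnd), ?_⟩
  · exact sub_eq_zero.mp (LinearForm.eval_sub.symm.trans (hfst.eval_eq_zero hv))
  · rw [← eval_orientForm]
    exact fun h => (horient.mul_eval_pos hv).ne' (by rw [h, zero_mul])

theorem Separated.segmentsSeparated (h : Separated K A B C D) (hv : v ∈ K.points) :
    SegmentsSeparated (A.eval v) (B.eval v) (C.eval v) (D.eval v) := by
  have hend {A B C D} (h : ShareEnd K A B C D) := h.eval_eq_and_orient_ne_zero hv
  have hside {A B C D} (h : K.SameSign (orientForm A B C) (orientForm A B D)) :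
      0 < orient (A.eval v) (B.eval v) (C.eval v) * orient (A.eval v) (B.eval v) (D.eval v) := by
    simpa only [eval_orientForm] using h.mul_eval_pos hv
  exact h.imp hend (.imp hend (.imp hend (.imp hend (.imp hside hside))))

end SymbolicPoint

end Symbolic

namespace KiteRing

/-- The sign that tells the two sides of the ring apart. -/
def sign (f : Bool) : ℤ := bif f then 1 else -1

/-- The position of a vertex of a sector of scale `s`, encoded by the numbers `α`, `β`, `y` for
which it is `(α + β s, y)`. The vertices `b` and `x` of the last sector have a place of their own,
from which its edges close the ring. -/
def SectorVertex.coord (last : Bool) : SectorVertex → ℤ × ℤ × ℤ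
  | pole f => (0, 0, 10 * sign f)
  | a f => (0, 32, sign f)
  | b f => bif last then (-40, 0, 22 * sign f) else (0, 20, 3 * sign f)
  | x => bif last then (62, 0, 0) else (0, 18, 0)
  | next f => bif last then (32, 0, sign f) else (0, 16, sign f)

/-- The position of a vertex of a sector of scale `s`, in terms of the parameters `(1, s, t)`. -/
def SectorVertex.atFst (last : Bool) (κ : SectorVertex) : SymbolicPoint :=
  ⟨((κ.coord last).1, (κ.coord last).2.1, 0), (κ.coord last).2.2⟩

/-- The position of a vertex of a sector of scale `t`, in terms of the parameters `(1, s, t)`. -/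
def SectorVertex.atSnd (last : Bool) (κ : SectorVertex) : SymbolicPoint :=
  ⟨((κ.coord last).1, 0, (κ.coord last).2.1), (κ.coord last).2.2⟩

/-- The edge that crosses a given edge; it lies in the same sector. -/
def SectorEdge.partner : SectorEdge → Option SectorEdge
  | diag f => some (diag !f)
  | poleX f => some (bNext f)
  | bNext f => some (poleX f)
  | _ => none

/-- A decidable criterion for each two edges of one sector to cross or to be separated as `partner`
tells, if the parameters lie in `K`. -/
def SectorDrawn (K : Cone) (last : Bool) : Prop :=
  ∀ τ σ : SectorEdge,
    (τ.partner = some σ → SymbolicPoint.Cross K (τ.src.atFst last) (τ.tgt.atFst last)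
      (σ.src.atFst last) (σ.tgt.atFst last)) ∧
    (τ ≠ σ → τ.partner ≠ some σ → SymbolicPoint.Separated K (τ.src.atFst last)
      (τ.tgt.atFst last) (σ.src.atFst last) (σ.tgt.atFst last))

/-- A decidable criterion for the edges of two sectors to be separated from each other, if the
parameters lie in `K`. -/
def SectorsSeparated (K : Cone) (last last' : Bool) : Prop :=
  ∀ τ σ : SectorEdge, SymbolicPoint.Separated K (τ.src.atFst last) (τ.tgt.atFst last)
    (σ.src.atSnd last') (σ.tgt.atSnd last')

instance (K : Cone) (last : Bool) : Decidable (SectorDrawn K last) :=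
  inferInstanceAs (Decidable (∀ _ _, _))

instance (K : Cone) (last last' : Bool) : Decidable (SectorsSeparated K last last') :=
  inferInstanceAs (Decidable (∀ _ _, _))

section Scale

variable {r : ℕ} {i j : ZMod r}

/-- The sectors shrink geometrically around the ring. -/
noncomputable def scale (i : ZMod r) : ℝ := (1 / 2) ^ i.val

theorem scale_pos (i : ZMod r) : 0 < scale i := by
  unfold scale
  positivity

theorem scale_le_one (i : ZMod r) : scale i ≤ 1 :=
  pow_le_one₀ (by norm_num) (by norm_num)

theorem scale_zero : scale (0 : ZMod r) = 1 := by simp [scale]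

theorem scale_eq_two_mul (h : i.val + 1 = j.val) : scale i = 2 * scale j := by
  rw [scale, scale, ← h, pow_succ]
  ring

theorem two_pow_mul_scale_le {d : ℕ} (h : i.val + d ≤ j.val) : 2 ^ d * scale j ≤ scale i :=
  calc
    2 ^ d * scale j ≤ 2 ^ d * (1 / 2) ^ (i.val + d) := by
      gcongr
      exact pow_le_pow_of_le_one (by norm_num) (by norm_num) h
    _ = scale i := by
      rw [pow_add, mul_left_comm, ← mul_pow]
      norm_num [scale]

theorem scale_le_half (h : i ≠ 0) : scale i ≤ 1 / 2 := by
  have hval : (0 : ZMod r).val + 1 ≤ i.val := by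
    simpa [Nat.one_le_iff_ne_zero] using h
  have := two_pow_mul_scale_le hval
  rw [scale_zero] at this
  linarith

variable [NeZero r]

theorem scale_injective : Function.Injective (scale : ZMod r → ℝ) := fun _ _ h =>
  ZMod.val_injective r (pow_right_injective₀ (by norm_num) (by norm_num) h)

theorem val_add_one (h : i + 1 ≠ 0) : i.val + 1 = (i + 1).val := by
  have hcast : ((i.val + 1 : ℕ) : ZMod r) = i + 1 := by simp
  rw [← hcast, ZMod.val_natCast_of_lt]
  refine lt_of_le_of_ne i.val_lt fun hr => h ?_
  rw [← hcast, hr, ZMod.natCast_self]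

theorem add_one_ne_zero_of_val_lt (h : i.val < j.val) : i + 1 ≠ 0 := by
  have hcast : ((i.val + 1 : ℕ) : ZMod r) = i + 1 := by simp
  rw [← hcast, Ne, ZMod.natCast_eq_zero_iff]
  exact Nat.not_dvd_of_pos_of_lt (by omega) (by have := j.val_lt; omega)

end Scale

section Cones

variable {r : ℕ} {i j : ZMod r}

theorem exists_cone_sectorsSeparated_ordinary (h : i.val < j.val) :
    ∃ K : Cone, (1, scale i, scale j) ∈ K.points ∧ SectorsSeparated K false false := by
  have hpos := scale_pos j
  obtain hadj | hfar := Nat.eq_or_lt_of_le (Nat.succ_le_of_lt h)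
  · refine ⟨⟨(1, 0, 0), 0, (0, 2, 1)⟩, ⟨1, 0, scale j, zero_le_one, le_rfl, hpos, ?_⟩,
      by decide +kernel⟩
    simp [scale_eq_two_mul hadj, mul_comm]
  · have hfour : 2 ^ 2 * scale j ≤ scale i := two_pow_mul_scale_le hfar
    refine ⟨⟨(1, 0, 0), (0, 1, 0), (0, 4, 1)⟩,
      ⟨1, scale i - 4 * scale j, scale j, zero_le_one, by linarith, hpos, ?_⟩, by decide +kernel⟩
    simp [mul_comm]

theorem exists_cone_sectorsSeparated_zero_last (h : j ≠ 0) :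
    ∃ K : Cone, (1, 1, scale j) ∈ K.points ∧ SectorsSeparated K false true := by
  have hpos := scale_pos j
  have hval : (0 : ZMod r).val + 1 ≤ j.val := by simpa [Nat.one_le_iff_ne_zero] using h
  obtain hadj | hfar := Nat.eq_or_lt_of_le hval
  · have hhalf : 1 = 2 * scale j := scale_zero.symm.trans (scale_eq_two_mul hadj)
    refine ⟨⟨0, 0, (2, 2, 1)⟩, ⟨0, 0, scale j, le_rfl, le_rfl, hpos, ?_⟩, by decide +kernel⟩
    simpa [mul_comm] using hhalf
  · have hfour : 2 ^ 2 * scale j ≤ 1 := (two_pow_mul_scale_le hfar).trans_eq scale_zero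
    refine ⟨⟨(1, 1, 0), 0, (4, 4, 1)⟩,
      ⟨1 - 4 * scale j, 0, scale j, by linarith, le_rfl, hpos, ?_⟩, by decide +kernel⟩
    simp [mul_comm]

theorem exists_cone_sectorsSeparated_last (h : i.val < j.val) (hi : i ≠ 0) :
    ∃ K : Cone, (1, scale i, scale j) ∈ K.points ∧ SectorsSeparated K false true := by
  have hpos := scale_pos j
  have hhalf := scale_le_half hi
  obtain hadj | hfar := Nat.eq_or_lt_of_le (Nat.succ_le_of_lt h)
  · have htwo : scale i = 2 * scale j := scale_eq_two_mul hadj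
    refine ⟨⟨(1, 0, 0), 0, (4, 2, 1)⟩,
      ⟨1 - 4 * scale j, 0, scale j, by linarith, le_rfl, hpos, ?_⟩, by decide +kernel⟩
    simp [htwo, mul_comm]
  · have hfour : 2 ^ 2 * scale j ≤ scale i := two_pow_mul_scale_le hfar
    refine ⟨⟨(1, 0, 0), (2, 1, 0), (8, 4, 1)⟩, ⟨1 - 2 * scale i, scale i - 4 * scale j, scale j,
      by linarith, by linarith, hpos, ?_⟩, by decide +kernel⟩
    simp only [Int.cast_one, mul_one, Int.cast_ofNat, Int.cast_zero, mul_zero, zero_add,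
      add_zero, Prod.mk.injEq, and_true]
    constructor <;> ring

theorem exists_cone_sectorDrawn (hr : 2 ≤ r) (i : ZMod r) :
    ∃ K : Cone, (1, scale i, scale i) ∈ K.points ∧ SectorDrawn K (decide (i + 1 = 0)) := by
  have hpos := scale_pos i
  by_cases hi : i + 1 = 0
  · have : Fact (1 < r) := ⟨hr⟩
    have hhalf : scale i ≤ 1 / 2 := scale_le_half (by rintro rfl; simp at hi)
    rw [decide_eq_true hi]
    refine ⟨⟨(1, 0, 0), 0, (2, 1, 1)⟩, ⟨1 - 2 * scale i, 0, scale i, by linarith, le_rfl, hpos, ?_⟩,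
      by decide +kernel⟩
    simp only [Int.cast_one, mul_one, Prod.fst_zero, Int.cast_zero, mul_zero, add_zero,
      Int.cast_ofNat, Prod.snd_zero, zero_add, Prod.mk.injEq, and_true]
    ring
  · rw [decide_eq_false hi]
    refine ⟨⟨(1, 0, 0), 0, (0, 1, 1)⟩, ⟨1, 0, scale i, zero_le_one, le_rfl, hpos, by simp⟩,
      by decide +kernel⟩

variable [NeZero r]

theorem exists_cone_sectorsSeparated (h : i.val < j.val) :
    ∃ K : Cone, (1, scale i, scale j) ∈ K.points ∧
      SectorsSeparated K (decide (i + 1 = 0)) (decide (j + 1 = 0)) := by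
  rw [decide_eq_false (add_one_ne_zero_of_val_lt h)]
  by_cases hj : j + 1 = 0
  · rw [decide_eq_true hj]
    obtain rfl | hi := eq_or_ne i 0
    · rw [scale_zero]
      exact exists_cone_sectorsSeparated_zero_last (by rintro rfl; exact h.false)
    · exact exists_cone_sectorsSeparated_last h hi
  · rw [decide_eq_false hj]
    exact exists_cone_sectorsSeparated_ordinary h

end Cones

section Position

variable {r : ℕ}

/-- The position of a vertex of sector `i`. -/
noncomputable def SectorVertex.position (i : ZMod r) (κ : SectorVertex) : ℝ × ℝ :=
  ((κ.coord (i + 1 = 0)).1 + (κ.coord (i + 1 = 0)).2.1 * scale i, (κ.coord (i + 1 = 0)).2.2)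

/-- The positions of the vertices in the drawing. -/
noncomputable def position : Vertex r → ℝ × ℝ
  | .pole f => SectorVertex.position (0 : ZMod r) (.pole f)
  | .a f i => SectorVertex.position i (.a f)
  | .b f i => SectorVertex.position i (.b f)
  | .x i => SectorVertex.position i .x

theorem SectorVertex.eval_atFst {i : ZMod r} {κ : SectorVertex} {t : ℝ} :
    (κ.atFst (i + 1 = 0)).eval (1, scale i, t) = κ.position i := by
  simp [SymbolicPoint.eval, LinearForm.eval, atFst, position]

theorem SectorVertex.eval_atSnd {i : ZMod r} {κ : SectorVertex} {s : ℝ} :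
    (κ.atSnd (i + 1 = 0)).eval (1, s, scale i) = κ.position i := by
  simp [SymbolicPoint.eval, LinearForm.eval, atSnd, position]

variable [NeZero r]

theorem position_at (i : ZMod r) (κ : SectorVertex) : position (κ.at i) = κ.position i := by
  cases κ with
  | pole f => simp [SectorVertex.at, position, SectorVertex.position, SectorVertex.coord]
  | a | b | x => rfl
  | next f =>
    by_cases hi : i + 1 = 0
    · simp [SectorVertex.at, position, SectorVertex.position, SectorVertex.coord, hi, scale_zero]
    · simp [SectorVertex.at, position, SectorVertex.position, SectorVertex.coord, hi,
        scale_eq_two_mul (val_add_one hi)]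
      ring

theorem position_injective : Function.Injective (position : Vertex r → ℝ × ℝ) := by
  intro v w h
  obtain ⟨hfst, hsnd⟩ := Prod.ext_iff.mp h
  cases v <;> cases w <;>
    simp only [position, SectorVertex.position, SectorVertex.coord, Int.cast_inj] at hfst hsnd
  case b.b f i g j =>
    by_cases hi : i + 1 = 0 <;> by_cases hj : j + 1 = 0 <;>
      simp only [hi, hj, decide_true, decide_false, cond_true, cond_false] at hfst hsnd <;>
      grind [sign, scale_injective.eq_iff]
  case x.x i j =>
    by_cases hi : i + 1 = 0 <;> by_cases hj : j + 1 = 0 <;>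
      simp only [hi, hj, decide_true, decide_false, cond_true, cond_false] at hfst <;>
      grind [scale_le_one, scale_injective.eq_iff]
  all_goals grind [sign, scale_injective.eq_iff]

theorem segmentsSeparated_of_val_lt {i j : ZMod r} (h : i.val < j.val) (τ σ : SectorEdge) :
    SegmentsSeparated (position (src (τ, i))) (position (tgt (τ, i)))
      (position (src (σ, j))) (position (tgt (σ, j))) := by
  obtain ⟨K, hK, hsep⟩ := exists_cone_sectorsSeparated h
  simpa only [SectorVertex.eval_atFst, SectorVertex.eval_atSnd, src, tgt, position_at]
    using (hsep τ σ).segmentsSeparated hK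

/-- The edge that crosses a given edge of the kite ring. -/
def partner (ε : SectorEdge × ZMod r) : Option (SectorEdge × ZMod r) :=
  ε.1.partner.map (·, ε.2)

theorem segmentCertificate (hr : 2 ≤ r) :
    SegmentCertificate (kiteRing r) position src tgt partner where
  pos_injective := position_injective
  edgeSet_eq := edgeSet_kiteRing
  exists_mem_edge := exists_mem_edge
  segmentsCross := by
    rintro ⟨τ, i⟩ ⟨σ, j⟩ h
    obtain ⟨_, hσ, ⟨⟩⟩ := Option.map_eq_some_iff.mp h
    obtain ⟨K, hK, hdrawn⟩ := exists_cone_sectorDrawn hr i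
    simpa only [SectorVertex.eval_atFst, src, tgt, position_at]
      using ((hdrawn τ σ).1 hσ).segmentsCross hK
  segmentsSeparated := by
    rintro ⟨τ, i⟩ ⟨σ, j⟩ hne h
    obtain hlt | heq | hlt := lt_trichotomy i.val j.val
    · exact segmentsSeparated_of_val_lt hlt τ σ
    · obtain rfl := ZMod.val_injective r heq
      obtain ⟨K, hK, hdrawn⟩ := exists_cone_sectorDrawn hr i
      have hτσ : τ ≠ σ := by rintro rfl; exact hne rfl
      have hX : τ.partner ≠ some σ := fun hτ => h (by simp [partner, hτ])
      simpa only [SectorVertex.eval_atFst, src, tgt, position_at]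
        using ((hdrawn τ σ).2 hτσ hX).segmentsSeparated hK
    · exact (segmentsSeparated_of_val_lt hlt σ τ).symm

end Position

end KiteRing

namespace SegmentCertificate

variable {V U ι : Type} {G : SimpleGraph V} {pos : V → ℝ × ℝ} {src tgt : ι → V}
  {partner : ι → Option ι}

/-- The edge `ε` joins an end of one of two crossing edges to an end of the other. -/
def IsKiteSide (src tgt : ι → V) (partner : ι → Option ι) (ε : ι) : Prop :=
  ∃ γ δ, partner γ = some δ ∧ src ε ∈ s(src γ, tgt γ) ∧ tgt ε ∈ s(src δ, tgt δ)

theorem IsKiteSide.map {ε : ι} (h : IsKiteSide src tgt partner ε) (φ : V → U) :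
    IsKiteSide (φ ∘ src) (φ ∘ tgt) partner ε :=
  let ⟨γ, δ, hX, hsrc, htgt⟩ := h
  ⟨γ, δ, hX, Sym2.mem_map.mpr ⟨_, hsrc, rfl⟩, Sym2.mem_map.mpr ⟨_, htgt, rfl⟩⟩

variable (C : SegmentCertificate G pos src tgt partner)
include C

theorem ncard_edgeSet : G.edgeSet.ncard = Nat.card ι := by
  rw [C.edgeSet_eq, ← image_univ, ncard_image_of_injective _ C.edge_injective, ncard_univ]

theorem crNum_drawing : C.drawing.crNum = {ε | (partner ε).isSome}.ncard / 2 := by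
  let pair (ε : ι) := (s(src ε, tgt ε), s(src ((partner ε).getD ε), tgt ((partner ε).getD ε)))
  have hpair : Function.Injective pair := fun ε δ h => C.edge_injective (congrArg Prod.fst h)
  rw [Drawing.crNum, ← ncard_image_of_injective _ hpair]
  congr 2
  ext ⟨e, f⟩
  constructor
  · intro h
    obtain ⟨ε, δ, rfl, rfl, hX⟩ := C.exists_of_cross h
    exact ⟨ε, by simp [hX], by simp [pair, hX]⟩
  · rintro ⟨ε, hε, h⟩
    obtain ⟨δ, hX⟩ := Option.isSome_iff_exists.mp hε
    obtain ⟨rfl, rfl⟩ := Prod.mk.inj h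
    exact C.cross_iff.mpr (by simp [hX])

theorem isMaximalOnePlane_drawing [Finite V] (h3 : 3 ≤ Nat.card V) {F : Set ι}
    (hcard : 3 * Nat.card V ≤ F.ncard + 6)
    (hcross : ∀ ε ∈ F, ∀ δ ∈ F, partner ε ≠ some δ)
    (hkite : ∀ ε ∈ F, (partner ε).isSome ∨ IsKiteSide src tgt partner ε) :
    C.drawing.IsMaximalOnePlane := by
  refine .of_skeleton C.isGood_drawing C.isOnePlanar_drawing h3
    (F := (fun ε => s(src ε, tgt ε)) '' F) ?_ ?_ ?_ ?_
  · rintro _ ⟨ε, -, rfl⟩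
    exact C.adj ε
  · rwa [ncard_image_of_injective _ C.edge_injective]
  · rintro _ ⟨ε, hε, rfl⟩ _ ⟨δ, hδ, rfl⟩ hX
    exact hcross ε hε δ hδ (C.cross_iff.mp hX)
  · rintro _ ⟨ε, hε, rfl⟩
    refine (hkite ε hε).imp (fun h => ?_) ?_
    · obtain ⟨δ, hX⟩ := Option.isSome_iff_exists.mp h
      exact ⟨_, C.cross_iff.mpr hX⟩
    · rintro ⟨γ, δ, hX, hsrc, htgt⟩
      obtain ⟨u, hu⟩ := hsrc
      obtain ⟨v, hv⟩ := htgt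
      exact ⟨_, _, u, v, rfl, hu ▸ hv ▸ C.cross_iff.mpr hX⟩

end SegmentCertificate

namespace KiteRing

/-- The edges that are left when one edge of each crossing pair of a sector is dropped. -/
def SectorEdge.skeleton : Finset SectorEdge := {diag true, poleX true, poleX false}ᶜ

variable {r : ℕ}

theorem partner_ne_some_of_mem_skeleton {ε δ : SectorEdge × ZMod r}
    (hε : ε.1 ∈ SectorEdge.skeleton) (hδ : δ.1 ∈ SectorEdge.skeleton) : partner ε ≠ some δ := by
  have hsector : ∀ τ ∈ SectorEdge.skeleton, ∀ σ ∈ SectorEdge.skeleton, τ.partner ≠ some σ := by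
    decide
  intro h
  obtain ⟨σ, hσ, rfl⟩ := Option.map_eq_some_iff.mp h
  exact hsector _ hε _ hδ hσ

open SegmentCertificate in
theorem isSome_partner_or_isKiteSide (ε : SectorEdge × ZMod r) :
    (partner ε).isSome ∨ IsKiteSide src tgt partner ε := by
  have hleft (a b : Vertex r) : a ∈ s(a, b) := Sym2.mem_mk_left a b
  have hright (a b : Vertex r) : b ∈ s(a, b) := Sym2.mem_mk_right a b
  obtain ⟨τ, i⟩ := ε
  cases τ with
  | diag | poleX | bNext => exact .inl rfl
  | aa => exact .inr ⟨(.diag true, i), (.diag false, i), rfl, hleft _ _, hleft _ _⟩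
  | bb => exact .inr ⟨(.diag false, i), (.diag true, i), rfl, hright _ _, hright _ _⟩
  | ab f =>
    refine .inr ⟨(.diag f, i), (.diag !f, i), rfl, hleft _ _, ?_⟩
    simp [tgt, SectorEdge.tgt]
  | poleA f =>
    refine .inr ⟨(.poleX f, i - 1), (.bNext f, i - 1), rfl, hleft _ _, ?_⟩
    simp [tgt, SectorEdge.tgt, SectorVertex.at]
  | poleB f => exact .inr ⟨(.poleX f, i), (.bNext f, i), rfl, hleft _ _, hleft _ _⟩
  | xb f => exact .inr ⟨(.poleX f, i), (.bNext f, i), rfl, hright _ _, hleft _ _⟩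
  | xNext f => exact .inr ⟨(.poleX f, i), (.bNext f, i), rfl, hright _ _, hright _ _⟩

theorem ncard_skeleton [NeZero r] :
    {ε : SectorEdge × ZMod r | ε.1 ∈ SectorEdge.skeleton}.ncard = 15 * r := by
  have hprod : {ε : SectorEdge × ZMod r | ε.1 ∈ SectorEdge.skeleton} =
      (SectorEdge.skeleton : Set SectorEdge) ×ˢ univ := by
    ext
    simp
  rw [hprod, ncard_prod, ncard_coe_finset, ncard_univ, Nat.card_zmod]
  rfl

theorem ncard_isSome_partner [NeZero r] :
    {ε : SectorEdge × ZMod r | (partner ε).isSome}.ncard = 6 * r := by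
  have hprod : {ε : SectorEdge × ZMod r | (partner ε).isSome} =
      ({τ | τ.partner.isSome} : Finset SectorEdge) ×ˢ univ := by
    ext
    simp [partner]
  rw [hprod, ncard_prod, ncard_coe_finset, ncard_univ, Nat.card_zmod]
  rfl

theorem card_edge [NeZero r] : Nat.card (SectorEdge × ZMod r) = 18 * r := by
  rw [Nat.card_prod, Nat.card_zmod, Nat.card_eq_fintype_card]
  rfl

end KiteRing

open KiteRing in
theorem stmt_16_general {r : ℕ} (hr : 2 ≤ r) :
    ∃ (G : SimpleGraph (Fin (5 * r + 2))) (D : Drawing G),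
      D.IsMaximalOnePlane ∧ KConnected G 6 ∧ crossingNumber G = 3 * r := by
  have : NeZero r := ⟨by omega⟩
  let φ : Vertex r ≃ Fin (5 * r + 2) := Finite.equivFinOfCardEq card_vertex
  let C := (segmentCertificate hr).map φ
  have hcard : Nat.card (Fin (5 * r + 2)) = 5 * r + 2 := Nat.card_fin _
  have hcr : C.drawing.crNum = 3 * r := by
    rw [C.crNum_drawing, ncard_isSome_partner]
    omega
  refine ⟨_, C.drawing, ?_, (kConnected_kiteRing hr).of_iso (SimpleGraph.Iso.map φ _), ?_⟩
  · refine C.isMaximalOnePlane_drawing (F := {ε | ε.1 ∈ SectorEdge.skeleton}) (by omega) ?_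
      (fun ε hε δ hδ => partner_ne_some_of_mem_skeleton hε hδ)
      fun ε _ => (isSome_partner_or_isKiteSide ε).imp_right (·.map φ)
    rw [ncard_skeleton]
    omega
  · rw [C.isGood_drawing.crossingNumber_eq (by omega) ?_, hcr]
    rw [hcr, C.ncard_edgeSet, card_edge]
    omega

/-- For every `n = 5 · 2^(k+1) - 8` with `k ≥ 1`, there is a 6-connected
maximal 1-plane graph on `n` vertices with crossing number `(3/5)(n - 2)`. -/
theorem stmt_16 (k : ℕ) (hk : 1 ≤ k) :
    ∃ (G : SimpleGraph (Fin (5 * 2 ^ (k + 1) - 8))) (D : Drawing G),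
      D.IsMaximalOnePlane ∧ KConnected G 6 ∧
      5 * crossingNumber G = 3 * (5 * 2 ^ (k + 1) - 8 - 2) := by
  have hpow : 2 ^ 2 ≤ 2 ^ (k + 1) := Nat.pow_le_pow_right two_pos (by omega)
  obtain ⟨r, hr⟩ := Nat.exists_eq_add_of_le' (hpow.trans' (by norm_num : 2 ≤ 2 ^ 2))
  have hn : 5 * 2 ^ (k + 1) - 8 = 5 * r + 2 := by omega
  rw [hn]
  obtain ⟨G, D, hD, hG, hcr⟩ := stmt_16_general (r := r) (by omega)
  exact ⟨G, D, hD, hG, by omega⟩
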